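/- arXiv:1109.6528 — 3 statements merged into one kernel-verified Lean document; each statement's English description precedes it below -/
import Mathlib

section
/- Let (R,m) be a local ring and M an R-module of finite and positive G-dimension which is horizontally linked. Then the following are equivalent: (i) depth_R(M) = rgr(λM); (ii) m ∈ Ass_R(Ext^{rgr(λM)}_R(λM,R)); (iii) depth_R(M) ≤ depth_{R_p}(M_p) for each prime p with Gdim_{R_p}(M_p) ≠ 0. -/
open CategoryTheory

noncomputable section

universe u

/-- The `i`-th Ext group `Ext^i_R(M,N)`, as a type (with its `R`-module structure). -/
abbrev extM (R : Type u) [CommRing R] (i : ℕ) (M N : Type u) [AddCommGroup M] [Module R M]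
    [AddCommGroup N] [Module R N] : Type u :=
  ((Ext R (ModuleCat.{u} R) i).obj (Opposite.op (ModuleCat.of R M))).obj (ModuleCat.of R N)

/-- The `i`-th Tor group `Tor^R_i(M,N)`, as a type. -/
abbrev torM (R : Type u) [CommRing R] (i : ℕ) (M N : Type u) [AddCommGroup M] [Module R M]
    [AddCommGroup N] [Module R N] : Type u :=
  ((Tor (ModuleCat.{u} R) i).obj (ModuleCat.of R M)).obj (ModuleCat.of R N)

/-- The `i`-th local cohomology `H^i_I(M)`, as a type. -/
abbrev locCoh (R : Type u) [CommRing R] (I : Ideal R) (i : ℕ) (M : Type u) [AddCommGroup M]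
    [Module R M] : Type u :=
  (localCohomology I i).obj (ModuleCat.of R M)

/-- A submodule `N ≤ M` is superfluous if `K ⊔ N = ⊤` implies `K = ⊤`. -/
def Submodule.IsSuperfluous {R M : Type u} [CommRing R] [AddCommGroup M] [Module R M]
    (N : Submodule R M) : Prop :=
  ∀ K : Submodule R M, K ⊔ N = ⊤ → K = ⊤

/-- A minimal projective resolution of `M` by finitely generated projective modules:
each `P i → Ω^i M` is a projective cover (i.e. has superfluous kernel). -/
structure MinRes (R : Type u) [CommRing R] (M : Type u) [AddCommGroup M] [Module R M] where
  P : ℕ → ModuleCat.{u} R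
  projective : ∀ i, Module.Projective R (P i)
  finite : ∀ i, Module.Finite R (P i)
  d : (i : ℕ) → (↥(P (i + 1)) →ₗ[R] ↥(P i))
  ε : ↥(P 0) →ₗ[R] M
  surj : Function.Surjective ε
  exact0 : LinearMap.range (d 0) = LinearMap.ker ε
  exact : ∀ i, LinearMap.range (d (i + 1)) = LinearMap.ker (d i)
  min_eps : (LinearMap.ker ε).IsSuperfluous
  min_d : ∀ i, (LinearMap.ker (d i)).IsSuperfluous

namespace MinRes

variable {R M : Type u} [CommRing R] [AddCommGroup M] [Module R M]

/-- `T k F` is the Auslander-Bridger transpose `𝒯_{k+1} M = Tr Ω^k M`, computed as the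
cokernel of `P_k* → P_{k+1}*`. -/
def T (F : MinRes R M) (k : ℕ) : Type u :=
  (Module.Dual R ↥(F.P (k + 1))) ⧸ LinearMap.range (F.d k).dualMap

instance (F : MinRes R M) (k : ℕ) : AddCommGroup (F.T k) :=
  inferInstanceAs (AddCommGroup ((Module.Dual R ↥(F.P (k + 1))) ⧸
    LinearMap.range (F.d k).dualMap))

instance (F : MinRes R M) (k : ℕ) : Module R (F.T k) :=
  inferInstanceAs (Module R ((Module.Dual R ↥(F.P (k + 1))) ⧸
    LinearMap.range (F.d k).dualMap))

/-- The transpose `Tr M = coker(P₀* → P₁*)` computed from a minimal projective presentation. -/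
abbrev Tr (F : MinRes R M) : Type u := F.T 0

/-- `λM = ΩTr M`, realized as the image of `P₀* → P₁*` for a minimal projective
presentation `P₁ → P₀ → M → 0`. -/
def lambdaMod (F : MinRes R M) : Type u :=
  ↥(LinearMap.range (F.d 0).dualMap)

instance (F : MinRes R M) : AddCommGroup F.lambdaMod :=
  inferInstanceAs (AddCommGroup ↥(LinearMap.range (F.d 0).dualMap))

instance (F : MinRes R M) : Module R F.lambdaMod :=
  inferInstanceAs (Module R ↥(LinearMap.range (F.d 0).dualMap))

end MinRes

/-- `M` is a horizontally linked `R`-module, i.e. `M ≅ λλM`. -/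
def IsHorizontallyLinked (R : Type u) [CommRing R] (M : Type u) [AddCommGroup M]
    [Module R M] : Prop :=
  ∃ (F : MinRes R M) (G : MinRes R F.lambdaMod), Nonempty (G.lambdaMod ≃ₗ[R] M)

/-- `M` and `N` are horizontally linked to each other: `M ≅ λN` and `N ≅ λM`. -/
def MutuallyLinked (A : Type u) [CommRing A] (M N : Type u) [AddCommGroup M] [Module A M]
    [AddCommGroup N] [Module A N] : Prop :=
  ∃ (F : MinRes A M) (G : MinRes A N),
    Nonempty (F.lambdaMod ≃ₗ[A] N) ∧ Nonempty (G.lambdaMod ≃ₗ[A] M)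

/-- `M` is linked to `N` by the ideal `c`: `c` annihilates both modules and they are
horizontally linked to each other as `R ⧸ c`-modules. -/
def LinkedBy (R : Type u) [CommRing R] (c : Ideal R) (M N : Type u) [AddCommGroup M]
    [Module R M] [AddCommGroup N] [Module R N] : Prop :=
  ∃ (hM : Module.IsTorsionBySet R M c) (hN : Module.IsTorsionBySet R N c),
    letI := hM.module
    letI := hN.module
    MutuallyLinked (R ⧸ c) M N

/-- A stable module: no nonzero projective direct summand. -/
def IsStableModule (R : Type u) [CommRing R] (M : Type u) [AddCommGroup M] [Module R M] : Prop :=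
  ∀ N : Submodule R M, Module.Projective R ↥N → (∃ N' : Submodule R M, IsCompl N N') → N = ⊥

/-- `M` has G-dimension zero: `M` is finitely generated and reflexive,
and `Ext^i(M,R) = 0 = Ext^i(M*,R)` for all `i > 0`. -/
def IsGDimZero (R : Type u) [CommRing R] (M : Type u) [AddCommGroup M] [Module R M] : Prop :=
  Module.Finite R M ∧ Function.Bijective (Module.Dual.eval R M) ∧
    (∀ i : ℕ, 0 < i → Subsingleton (extM R i M R)) ∧
    (∀ i : ℕ, 0 < i → Subsingleton (extM R i (Module.Dual R M) R))

/-- `M` admits a resolution of length `≤ n` by modules of G-dimension zero. -/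
def GDimLE (R : Type u) [CommRing R] : ℕ → ModuleCat.{u} R → Prop
  | 0, M => IsGDimZero R ↥M
  | n + 1, M =>
    ∃ (G : ModuleCat.{u} R) (f : ↥G →ₗ[R] ↥M), IsGDimZero R ↥G ∧ Function.Surjective f ∧
      GDimLE R n (ModuleCat.of R ↥(LinearMap.ker f))

/-- The G-dimension of `M`: the minimal length of a resolution of `M` by modules of
G-dimension zero (`∞` if there is none). -/
def GDim (R : Type u) [CommRing R] (M : Type u) [AddCommGroup M] [Module R M] : ℕ∞ :=
  sInf {n : ℕ∞ | ∃ k : ℕ, n = k ∧ GDimLE R k (ModuleCat.of R M)}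

/-- The reduced grade of `M`: `rgr M = inf{ i > 0 | Ext^i(M,R) ≠ 0 }`. -/
def rgr (R : Type u) [CommRing R] (M : Type u) [AddCommGroup M] [Module R M] : ℕ∞ :=
  sInf {n : ℕ∞ | ∃ k : ℕ, n = k ∧ 0 < k ∧ ¬ Subsingleton (extM R k M R)}

/-- The grade of `M`: `gr M = inf{ i ≥ 0 | Ext^i(M,R) ≠ 0 }`. -/
def egrade (R : Type u) [CommRing R] (M : Type u) [AddCommGroup M] [Module R M] : ℕ∞ :=
  sInf {n : ℕ∞ | ∃ k : ℕ, n = k ∧ ¬ Subsingleton (extM R k M R)}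

/-- `depth_I(M) = inf{ i | Ext^i(R/I, M) ≠ 0 }`; for `I` the maximal ideal of a
local ring this is the depth of `M`. -/
def edepth (R : Type u) [CommRing R] (I : Ideal R) (M : Type u) [AddCommGroup M]
    [Module R M] : ℕ∞ :=
  sInf {n : ℕ∞ | ∃ k : ℕ, n = k ∧ ¬ Subsingleton (extM R k (R ⧸ I) M)}

/-- The depth of the local ring `R`. -/
def rdepth (R : Type u) [CommRing R] [IsLocalRing R] : ℕ∞ :=
  edepth R (IsLocalRing.maximalIdeal R) R

/-- `depth_{R_p}(M_p)`. -/
def locDepth (R : Type u) [CommRing R] (p : Ideal R) [p.IsPrime] (M : Type u) [AddCommGroup M]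
    [Module R M] : ℕ∞ :=
  edepth (Localization.AtPrime p) (IsLocalRing.maximalIdeal (Localization.AtPrime p))
    (LocalizedModule p.primeCompl M)

/-- `depth R_p`. -/
def locRingDepth (R : Type u) [CommRing R] (p : Ideal R) [p.IsPrime] : ℕ∞ :=
  rdepth (Localization.AtPrime p)

/-- `Gdim_{R_p}(M_p)`. -/
def locGDim (R : Type u) [CommRing R] (p : Ideal R) [p.IsPrime] (M : Type u) [AddCommGroup M]
    [Module R M] : ℕ∞ :=
  GDim (Localization.AtPrime p) (LocalizedModule p.primeCompl M)

/-- `rgr_{R_p}(M_p)`. -/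
def locRgr (R : Type u) [CommRing R] (p : Ideal R) [p.IsPrime] (M : Type u) [AddCommGroup M]
    [Module R M] : ℕ∞ :=
  rgr (Localization.AtPrime p) (LocalizedModule p.primeCompl M)

/-- `dim_{R_p}(M_p)`, the Krull dimension of the support of `M_p` over `R_p`. -/
def locDim (R : Type u) [CommRing R] (p : Ideal R) [p.IsPrime] (M : Type u) [AddCommGroup M]
    [Module R M] : WithBot ℕ∞ :=
  ringKrullDim ((Localization.AtPrime p) ⧸
    Module.annihilator (Localization.AtPrime p) (LocalizedModule p.primeCompl M))

/-- `M` satisfies the condition `S̃_k`: `depth_{R_p}(M_p) ≥ min{k, depth R_p}` for all primes. -/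
def Stilde (R : Type u) [CommRing R] (k : ℕ) (M : Type u) [AddCommGroup M] [Module R M] : Prop :=
  ∀ (p : Ideal R) (_ : p.IsPrime), min (k : ℕ∞) (locRingDepth R p) ≤ locDepth R p M

/-- `M` satisfies Serre's condition `(S_k)`:
`depth_{R_p}(M_p) ≥ min{k, dim_{R_p}(M_p)}` for all primes. -/
def SerreS (R : Type u) [CommRing R] (k : ℕ) (M : Type u) [AddCommGroup M] [Module R M] : Prop :=
  ∀ (p : Ideal R) (_ : p.IsPrime),
    min (k : WithBot ℕ∞) (locDim R p M) ≤ (locDepth R p M : WithBot ℕ∞)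

/-- `M` is a `k`-th syzygy module. -/
def IsKthSyzygy (R : Type u) [CommRing R] : ℕ → ModuleCat.{u} R → Prop
  | 0, _ => True
  | k + 1, M =>
    ∃ (P : ModuleCat.{u} R) (f : ↥M →ₗ[R] ↥P), Module.Projective R ↥P ∧ Module.Finite R ↥P ∧
      Function.Injective f ∧ IsKthSyzygy R k (ModuleCat.of R (↥P ⧸ LinearMap.range f))

/-- The `I`-torsion submodule `Γ_I(M) = { x | I^n x = 0 for some n }`. -/
def gammaTorsion (R : Type u) [CommRing R] (I : Ideal R) (M : Type u) [AddCommGroup M]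
    [Module R M] : Submodule R M where
  carrier := {x | ∃ n : ℕ, ∀ a ∈ I ^ n, a • x = 0}
  zero_mem' := ⟨0, fun a _ => smul_zero a⟩
  add_mem' := by
    rintro x y ⟨n, hn⟩ ⟨m, hm⟩
    exact ⟨n + m, fun a ha => by
      rw [smul_add, hn a (Ideal.pow_le_pow_right (Nat.le_add_right n m) ha),
        hm a (Ideal.pow_le_pow_right (Nat.le_add_left m n) ha), add_zero]⟩
  smul_mem' := by
    rintro c x ⟨n, hn⟩
    exact ⟨n, fun a ha => by rw [smul_comm, hn a ha, smul_zero]⟩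

/-- `N` has finite flat dimension (characterized by uniform vanishing of `Tor`). -/
def HasFiniteFlatDim (R : Type u) [CommRing R] (N : Type u) [AddCommGroup N] [Module R N] : Prop :=
  ∃ n : ℕ, ∀ i : ℕ, n < i → ∀ (M : ModuleCat.{u} R), Subsingleton (torM R i ↥M N)

/-- `N` has finite injective dimension (characterized by uniform vanishing of `Ext`). -/
def HasFiniteInjDim (R : Type u) [CommRing R] (N : Type u) [AddCommGroup N] [Module R N] : Prop :=
  ∃ n : ℕ, ∀ i : ℕ, n < i → ∀ (M : ModuleCat.{u} R), Subsingleton (extM R i ↥M N)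

/-- `K` is a semidualizing `R`-module. -/
def IsSemidualizing (R : Type u) [CommRing R] (K : Type u) [AddCommGroup K] [Module R K] : Prop :=
  Module.Finite R K ∧ Function.Bijective (LinearMap.lsmul R K) ∧
    ∀ i : ℕ, 0 < i → Subsingleton (extM R i K K)

/-- The biduality map `M → Hom(Hom(M,K),K)`. -/
def evalK (R : Type u) [CommRing R] (K M : Type u) [AddCommGroup K] [Module R K]
    [AddCommGroup M] [Module R M] : M →ₗ[R] ((M →ₗ[R] K) →ₗ[R] K) :=
  LinearMap.applyₗ

/-- `M` has `G_K`-dimension zero. -/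
def IsGKDimZero (R : Type u) [CommRing R] (K M : Type u) [AddCommGroup K] [Module R K]
    [AddCommGroup M] [Module R M] : Prop :=
  Module.Finite R M ∧ Function.Bijective (evalK R K M) ∧
    (∀ i : ℕ, 0 < i → Subsingleton (extM R i M K)) ∧
    (∀ i : ℕ, 0 < i → Subsingleton (extM R i (M →ₗ[R] K) K))

/-- `M` admits a resolution of length `≤ n` by modules of `G_K`-dimension zero. -/
def GKDimLE (R : Type u) [CommRing R] (K : Type u) [AddCommGroup K] [Module R K] :
    ℕ → ModuleCat.{u} R → Prop
  | 0, M => IsGKDimZero R K ↥M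
  | n + 1, M =>
    ∃ (G : ModuleCat.{u} R) (f : ↥G →ₗ[R] ↥M), IsGKDimZero R K ↥G ∧ Function.Surjective f ∧
      GKDimLE R K n (ModuleCat.of R ↥(LinearMap.ker f))

/-- The `G_K`-dimension of `M`. -/
def GKDim (R : Type u) [CommRing R] (K M : Type u) [AddCommGroup K] [Module R K]
    [AddCommGroup M] [Module R M] : ℕ∞ :=
  sInf {n : ℕ∞ | ∃ k : ℕ, n = k ∧ GKDimLE R K k (ModuleCat.of R M)}

/-- The grade of a module, `gr_R(M) = grade(Ann_R(M), R) = inf{i | Ext^i(R/Ann M, R) ≠ 0}`. -/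
def grAnn (R : Type u) [CommRing R] (M : Type u) [AddCommGroup M] [Module R M] : ℕ∞ :=
  egrade R (R ⧸ Module.annihilator R M)

/-- The grade of an ideal, `grade(I) = inf{i | Ext^i(R/I, R) ≠ 0}`. -/
def gradeI (R : Type u) [CommRing R] (I : Ideal R) : ℕ∞ :=
  egrade R (R ⧸ I)

/-- The ideal `I` is `G_K`-Gorenstein: `R/I` is `G_K`-perfect and `Ext^{gr I}(R/I, K)` is
cyclic. -/
def IsGKGorensteinIdeal (R : Type u) [CommRing R] (K : Type u) [AddCommGroup K] [Module R K]
    (I : Ideal R) : Prop :=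
  ∃ n : ℕ, grAnn R (R ⧸ I) = (n : ℕ∞) ∧ GKDim R K (R ⧸ I) = (n : ℕ∞) ∧
    ∃ x : extM R n (R ⧸ I) K, Submodule.span R {x} = ⊤

end

noncomputable section

namespace S6

abbrev EX (R : Type u) [CommRing R] (M N : Type u) [AddCommGroup M] [Module R M]
    [AddCommGroup N] [Module R N] (i : ℕ) : Type u :=
  Abelian.Ext (ModuleCat.of R M) (ModuleCat.of R N) i

section basic
variable {R : Type u} [CommRing R]
variable {M N K X Y Z : Type u} [AddCommGroup M] [Module R M]
  [AddCommGroup N] [Module R N] [AddCommGroup K] [Module R K]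
  [AddCommGroup X] [Module R X] [AddCommGroup Y] [Module R Y] [AddCommGroup Z] [Module R Z]

/-- covariant functoriality -/
def cov (X : Type u) [AddCommGroup X] [Module R X] (f : M →ₗ[R] N) (i : ℕ) :
    EX R X M i →ₗ[R] EX R X N i where
  toFun x := x.comp (Abelian.Ext.mk₀ (ModuleCat.ofHom f)) (add_zero i)
  map_add' := by intros; simp
  map_smul' := by intros; simp

def con (Y : Type u) [AddCommGroup Y] [Module R Y] (f : M →ₗ[R] N) (i : ℕ) :
    EX R N Y i →ₗ[R] EX R M Y i where
  toFun x := (Abelian.Ext.mk₀ (ModuleCat.ofHom f)).comp x (zero_add i)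
  map_add' := by intros; simp
  map_smul' := by intros; simp

lemma cov_apply (f : M →ₗ[R] N) (i : ℕ) (x : EX R X M i) :
  cov X f i x = x.comp (Abelian.Ext.mk₀ (ModuleCat.ofHom f)) (add_zero i) := rfl

lemma con_apply (f : M →ₗ[R] N) (i : ℕ) (x : EX R N Y i) :
  con Y f i x = (Abelian.Ext.mk₀ (ModuleCat.ofHom f)).comp x (zero_add i) := rfl

lemma cov_comp (f : M →ₗ[R] N) (g : N →ₗ[R] K) (i : ℕ) (x : EX R X M i) :
    cov X g i (cov X f i x) = cov X (g ∘ₗ f) i x := by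
  simp [cov_apply, ModuleCat.ofHom_comp]

lemma con_comp (f : M →ₗ[R] N) (g : N →ₗ[R] K) (i : ℕ) (x : EX R K Y i) :
    con Y f i (con Y g i x) = con Y (g ∘ₗ f) i x := by
  simp [con_apply, ModuleCat.ofHom_comp]

lemma cov_id (i : ℕ) (x : EX R X M i) : cov X (LinearMap.id : M →ₗ[R] M) i x = x := by
  simp [cov_apply]

lemma con_id (i : ℕ) (x : EX R M Y i) : con Y (LinearMap.id : M →ₗ[R] M) i x = x := by
  simp [con_apply]

lemma cov_add (f g : M →ₗ[R] N) (i : ℕ) (x : EX R X M i) :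
    cov X (f + g) i x = cov X f i x + cov X g i x := by
  simp [cov_apply, ModuleCat.ofHom_add, Abelian.Ext.mk₀_add]

lemma cov_zero (i : ℕ) (x : EX R X M i) : cov X (0 : M →ₗ[R] N) i x = 0 := by
  have := cov_add (0 : M →ₗ[R] N) 0 i x
  simpa using this

lemma con_add (f g : M →ₗ[R] N) (i : ℕ) (x : EX R N Y i) :
    con Y (f + g) i x = con Y f i x + con Y g i x := by
  simp [con_apply, ModuleCat.ofHom_add, Abelian.Ext.mk₀_add]

lemma con_zero (i : ℕ) (x : EX R N Y i) : con Y (0 : M →ₗ[R] N) i x = 0 := by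
  have := con_add (0 : M →ₗ[R] N) 0 i x
  simpa using this

lemma cov_smul (r : R) (f : M →ₗ[R] N) (i : ℕ) (x : EX R X M i) :
    cov X (r • f) i x = r • cov X f i x := by
  have : ModuleCat.ofHom (r • f) = r • ModuleCat.ofHom f := rfl
  simp [cov_apply, this, Abelian.Ext.mk₀_smul]

lemma con_smul (r : R) (f : M →ₗ[R] N) (i : ℕ) (x : EX R N Y i) :
    con Y (r • f) i x = r • con Y f i x := by
  have : ModuleCat.ofHom (r • f) = r • ModuleCat.ofHom f := rfl
  simp [con_apply, this, Abelian.Ext.mk₀_smul]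

lemma cov_sum {ι : Type*} (s : Finset ι) (f : ι → M →ₗ[R] N) (i : ℕ) (x : EX R X M i) :
    cov X (∑ j ∈ s, f j) i x = ∑ j ∈ s, cov X (f j) i x := by
  classical
  induction s using Finset.induction_on with
  | empty => simp [cov_zero]
  | insert a s ha ih => simp [Finset.sum_insert ha, cov_add, ih]

def covEquiv (X : Type u) [AddCommGroup X] [Module R X] (e : M ≃ₗ[R] N) (i : ℕ) :
    EX R X M i ≃ₗ[R] EX R X N i :=
  LinearEquiv.ofLinearMap (cov X e.toLinearMap i) (cov X e.symm.toLinearMap i)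
    (by ext x; simp [cov_comp, cov_id]) (by ext x; simp [cov_comp, cov_id])

def conEquiv (Y : Type u) [AddCommGroup Y] [Module R Y] (e : M ≃ₗ[R] N) (i : ℕ) :
    EX R N Y i ≃ₗ[R] EX R M Y i :=
  LinearEquiv.ofLinearMap (con Y e.toLinearMap i) (con Y e.symm.toLinearMap i)
    (by ext x; simp [con_comp, con_id]) (by ext x; simp [con_comp, con_id])

/-- degree zero -/
def ex0 (M N : Type u) [AddCommGroup M] [Module R M]
    [AddCommGroup N] [Module R N] : EX R M N 0 ≃ₗ[R] (M →ₗ[R] N) :=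
  Abelian.Ext.linearEquiv₀.trans ModuleCat.homLinearEquiv

lemma ex0_symm (f : M →ₗ[R] N) : (ex0 M N).symm f = Abelian.Ext.mk₀ (ModuleCat.ofHom f) := rfl

lemma ex0_cov (f : M →ₗ[R] N) (x : EX R X M 0) :
    ex0 X N (cov X f 0 x) = f ∘ₗ ex0 X M x := by
  obtain ⟨g, rfl⟩ := (ex0 X M).symm.surjective x
  rw [LinearEquiv.apply_symm_apply, ← LinearEquiv.eq_symm_apply, ex0_symm, ex0_symm, cov_apply,
    Abelian.Ext.mk₀_comp_mk₀, ModuleCat.ofHom_comp]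

lemma ex0_con (f : M →ₗ[R] N) (x : EX R N Y 0) :
    ex0 M Y (con Y f 0 x) = ex0 N Y x ∘ₗ f := by
  obtain ⟨g, rfl⟩ := (ex0 N Y).symm.surjective x
  rw [LinearEquiv.apply_symm_apply, ← LinearEquiv.eq_symm_apply, ex0_symm, ex0_symm, con_apply,
    Abelian.Ext.mk₀_comp_mk₀, ModuleCat.ofHom_comp]

lemma ex_proj [Module.Projective R M] (i : ℕ) : Subsingleton (EX R M Y (i+1)) := by
  have : Projective (ModuleCat.of R M) := ModuleCat.projective_of_categoryTheory_projective _
  exact ⟨fun a b => by rw [Abelian.Ext.eq_zero_of_projective a, Abelian.Ext.eq_zero_of_projective b]⟩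

variable {f : M →ₗ[R] N} {g : N →ₗ[R] K}

/-- the short complex -/
abbrev scx (f : M →ₗ[R] N) (g : N →ₗ[R] K) (h : Function.Exact f g) :
    ShortComplex (ModuleCat.{u} R) :=
  ShortComplex.mk (ModuleCat.ofHom f) (ModuleCat.ofHom g)
    (by rw [← ModuleCat.ofHom_comp, h.linearMap_comp_eq_zero]; rfl)

lemma scx_se (h : Function.Exact f g) (hf : Function.Injective f) (hg : Function.Surjective g) :
    (scx f g h).ShortExact := ModuleCat.shortComplex_shortExact _ h hf hg

lemma cov_exact (h : Function.Exact f g) (hf : Function.Injective f) (hg : Function.Surjective g)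
    (i : ℕ) : Function.Exact (cov X f i) (cov X g i) := by
  intro x
  constructor
  · intro hx
    exact Abelian.Ext.covariant_sequence_exact₂ _ (scx_se h hf hg) x hx
  · rintro ⟨y, rfl⟩
    rw [cov_comp, h.linearMap_comp_eq_zero, cov_zero]

lemma cov_delta (X : Type u) [AddCommGroup X] [Module R X]
    (h : Function.Exact f g) (hf : Function.Injective f) (hg : Function.Surjective g)
    (i : ℕ) : ∃ δ : EX R X K i →ₗ[R] EX R X M (i+1),
      Function.Exact (cov X g i) δ ∧ Function.Exact δ (cov X f (i+1)) := by
  refine ⟨⟨⟨fun x => x.comp (scx_se h hf hg).extClass rfl, by intros; simp⟩, by intros; simp⟩, ?_, ?_⟩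
  · intro x
    constructor
    · intro hx
      exact Abelian.Ext.covariant_sequence_exact₃ _ (scx_se h hf hg) x rfl hx
    · rintro ⟨y, rfl⟩
      have := (scx_se h hf hg).comp_extClass
      simp only [cov_apply, LinearMap.coe_mk, AddHom.coe_mk]
      rw [Abelian.Ext.comp_assoc_of_second_deg_zero]
      erw [this]
      exact Abelian.Ext.comp_zero ..
  · intro x
    constructor
    · intro hx
      exact Abelian.Ext.covariant_sequence_exact₁ _ (scx_se h hf hg) x hx rfl
    · rintro ⟨y, rfl⟩
      have := (scx_se h hf hg).extClass_comp
      simp only [cov_apply, LinearMap.coe_mk, AddHom.coe_mk]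
      rw [Abelian.Ext.comp_assoc_of_third_deg_zero]
      erw [this]
      exact Abelian.Ext.comp_zero ..

lemma con_exact (h : Function.Exact f g) (hf : Function.Injective f) (hg : Function.Surjective g)
    (i : ℕ) : Function.Exact (con Y g i) (con Y f i) := by
  intro x
  constructor
  · intro hx
    exact Abelian.Ext.contravariant_sequence_exact₂ (scx_se h hf hg) _ x hx
  · rintro ⟨y, rfl⟩
    rw [con_comp, h.linearMap_comp_eq_zero, con_zero]

lemma con_delta (Y : Type u) [AddCommGroup Y] [Module R Y]
    (h : Function.Exact f g) (hf : Function.Injective f) (hg : Function.Surjective g)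
    (i : ℕ) : ∃ δ : EX R M Y i →ₗ[R] EX R K Y (i+1),
      Function.Exact (con Y f i) δ ∧ Function.Exact δ (con Y g (i+1)) := by
  refine ⟨⟨⟨fun x => (scx_se h hf hg).extClass.comp x (add_comm 1 i), by intros; simp⟩, by intros; simp⟩, ?_, ?_⟩
  · intro x
    constructor
    · intro hx
      exact Abelian.Ext.contravariant_sequence_exact₁ (scx_se h hf hg) _ x (add_comm 1 i) hx
    · rintro ⟨y, rfl⟩
      simp only [con_apply, LinearMap.coe_mk, AddHom.coe_mk]
      exact (scx_se h hf hg).extClass_comp_assoc y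
  · intro x
    constructor
    · intro hx
      exact Abelian.Ext.contravariant_sequence_exact₃ (scx_se h hf hg) _ x hx (add_comm 1 i)
    · rintro ⟨y, rfl⟩
      simp only [con_apply, LinearMap.coe_mk, AddHom.coe_mk]
      exact (scx_se h hf hg).comp_extClass_assoc y (add_comm 1 i)

lemma cov_inj0 (hf : Function.Injective f) : Function.Injective (cov X f 0) := by
  intro x y hxy
  apply (ex0 X M).injective
  have := congrArg (ex0 X N) hxy
  rw [ex0_cov, ex0_cov] at this
  ext z
  exact hf (LinearMap.congr_fun this z)

lemma cov_inj (h : Function.Exact f g) (hf : Function.Injective f) (hg : Function.Surjective g)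
    (i : ℕ) (hs : Subsingleton (EX R X K i)) : Function.Injective (cov X f (i+1)) := by
  obtain ⟨δ, h1, h2⟩ := cov_delta X h hf hg i
  rw [injective_iff_map_eq_zero]
  intro x hx
  obtain ⟨y, rfl⟩ := (h2 x).1 hx
  rw [Subsingleton.elim y 0, map_zero]

/-- covariant dimension shift -/
lemma cov_shift (h : Function.Exact f g) (hf : Function.Injective f) (hg : Function.Surjective g)
    (i : ℕ) (h0 : Subsingleton (EX R X N i)) (h1 : Subsingleton (EX R X N (i+1))) :
    Nonempty (EX R X K i ≃ₗ[R] EX R X M (i+1)) := by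
  obtain ⟨δ, e1, e2⟩ := cov_delta X h hf hg i
  refine ⟨LinearEquiv.ofBijective δ ⟨?_, ?_⟩⟩
  · rw [injective_iff_map_eq_zero]
    intro x hx
    obtain ⟨y, rfl⟩ := (e1 x).1 hx
    rw [Subsingleton.elim y 0, map_zero]
  · intro x
    exact (e2 x).1 (Subsingleton.elim _ _)

lemma con_shift (h : Function.Exact f g) (hf : Function.Injective f) (hg : Function.Surjective g)
    (i : ℕ) (h0 : Subsingleton (EX R N Y i)) (h1 : Subsingleton (EX R N Y (i+1))) :
    Nonempty (EX R M Y i ≃ₗ[R] EX R K Y (i+1)) := by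
  obtain ⟨δ, e1, e2⟩ := con_delta Y h hf hg i
  refine ⟨LinearEquiv.ofBijective δ ⟨?_, ?_⟩⟩
  · rw [injective_iff_map_eq_zero]
    intro x hx
    obtain ⟨y, rfl⟩ := (e1 x).1 hx
    rw [Subsingleton.elim y 0, map_zero]
  · intro x
    exact (e2 x).1 (Subsingleton.elim _ _)

/-- `Ext^1` as a cokernel -/
lemma con_ext1 (h : Function.Exact f g) (hf : Function.Injective f) (hg : Function.Surjective g)
    (h1 : Subsingleton (EX R N R 1)) :
    Nonempty ((Module.Dual R M ⧸ LinearMap.range f.dualMap) ≃ₗ[R] EX R K R 1) := by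
  obtain ⟨δ, e1, e2⟩ := con_delta R h hf hg 0
  let φ : Module.Dual R M →ₗ[R] EX R K R 1 := δ ∘ₗ (ex0 M R).symm.toLinearMap
  have hs : Function.Surjective φ := by
    intro x
    obtain ⟨y, rfl⟩ := (e2 x).1 (Subsingleton.elim _ _)
    exact ⟨ex0 M R y, by simp [φ]⟩
  have hk : LinearMap.ker φ = LinearMap.range f.dualMap := by
    ext x
    simp only [LinearMap.mem_ker, LinearMap.mem_range]
    constructor
    · intro hx
      obtain ⟨y, hy⟩ := (e1 _).1 hx
      refine ⟨ex0 N R y, ?_⟩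
      have := ex0_con (Y := R) f y
      rw [hy] at this
      rw [LinearEquiv.coe_coe, LinearEquiv.apply_symm_apply] at this
      exact this.symm
    · rintro ⟨y, rfl⟩
      apply (e1 _).2
      refine ⟨(ex0 N R).symm y, ?_⟩
      apply (ex0 M R).injective
      rw [ex0_con]
      simp
      rfl
  exact ⟨(Submodule.quotEquivOfEq _ _ hk.symm).trans (φ.quotKerEquivOfSurjective hs)⟩

lemma sub_mid {A B C : Type*} [AddCommGroup A] [Module R A] [AddCommGroup B] [Module R B]
    [AddCommGroup C] [Module R C] {f : A →ₗ[R] B} {g : B →ₗ[R] C} (h : Function.Exact f g)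
    (hA : Subsingleton A) (hC : Subsingleton C) : Subsingleton B := by
  refine subsingleton_of_forall_eq 0 fun b => ?_
  obtain ⟨a, rfl⟩ := (h b).1 (Subsingleton.elim _ _)
  rw [Subsingleton.elim a 0, map_zero]

lemma cov_van1 (h : Function.Exact f g) (hf : Function.Injective f) (hg : Function.Surjective g)
    (i : ℕ) (h0 : Subsingleton (EX R X K i)) (h1 : Subsingleton (EX R X N (i+1))) :
    Subsingleton (EX R X M (i+1)) := by
  obtain ⟨δ, e1, e2⟩ := cov_delta X h hf hg i
  exact sub_mid e2 h0 h1

lemma cov_van0 (hf : Function.Injective f) (h : Subsingleton (EX R X N 0)) :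
    Subsingleton (EX R X M 0) := (cov_inj0 hf).subsingleton

end basic
end S6

end

noncomputable section
namespace S6
section bridge
variable {R : Type u} [CommRing R]

lemma hom_bridge {S : ShortComplex (ModuleCat.{u} R)} {E : Type u} [AddCommGroup E] [Module R E]
    (Ψ : LinearMap.ker S.g.hom →ₗ[R] E) (hs : Function.Surjective Ψ)
    (hk : ∀ x, Ψ x = 0 ↔ ∃ y, S.f.hom y = x.1) : Nonempty (S.homology ≃ₗ[R] E) := by
  have hk' : LinearMap.ker Ψ = LinearMap.range S.moduleCatToCycles := by
    ext x
    simp only [LinearMap.mem_ker, LinearMap.mem_range, hk]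
    constructor
    · rintro ⟨y, hy⟩; exact ⟨y, Subtype.ext hy⟩
    · rintro ⟨y, hy⟩; exact ⟨y, congrArg Subtype.val hy⟩
  exact ⟨S.moduleCatHomologyIso.toLinearEquiv.trans
    ((Submodule.quotEquivOfEq _ _ hk'.symm).trans (Ψ.quotKerEquivOfSurjective hs))⟩

lemma ext_bridge (i : ℕ) (X Y : ModuleCat.{u} R) :
    Nonempty (((Ext R (ModuleCat.{u} R) i).obj (Opposite.op X)).obj Y ≃ₗ[R] Abelian.Ext X Y i) := by
  let P := ProjectiveResolution.of X
  let C := P.complex.linearYonedaObj R Y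
  let e1 := (P.isoExt (R := R) i Y).toLinearEquiv
  suffices h : Nonempty (C.homology i ≃ₗ[R] Abelian.Ext X Y i) from ⟨e1.trans h.some⟩
  rcases i with _ | i
  · let S := C.sc' 0 0 1
    let e2 := (C.homologyIsoSc' 0 0 1 (by simp) (by simp)).toLinearEquiv
    suffices h : Nonempty (S.homology ≃ₗ[R] Abelian.Ext X Y 0) from ⟨e2.trans h.some⟩
    have hmem : ∀ x : LinearMap.ker S.g.hom, P.complex.d 1 0 ≫ (show P.complex.X 0 ⟶ Y from x.1) = 0 := by
      intro x
      have := x.2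
      simp only [S, C, HomologicalComplex.sc'] at this
      exact this
    let Φ : (X ⟶ Y) →ₗ[R] LinearMap.ker S.g.hom :=
      { toFun := fun g => ⟨P.π.f 0 ≫ g, by
          simp only [S, C, HomologicalComplex.sc']
          show P.complex.d 1 0 ≫ P.π.f 0 ≫ g = 0
          have := P.complex_d_comp_π_f_zero
          exact (Category.assoc _ _ _).symm.trans ((congrArg (· ≫ g) this).trans Limits.zero_comp)⟩
        map_add' := by
          intro a b
          apply Subtype.ext
          exact Preadditive.comp_add _ _ _ _ _ _
        map_smul' := by
          intro a b
          apply Subtype.ext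
          exact Linear.comp_smul _ _ _ _ _ _ }
    have hΦ : Function.Bijective Φ := by
      constructor
      · intro a b hab
        have : P.π.f 0 ≫ a = P.π.f 0 ≫ b := congrArg Subtype.val hab
        exact (cancel_epi (P.π.f 0)).1 this
      · intro x
        have ex := P.exact₀
        refine ⟨ex.desc (show P.complex.X 0 ⟶ Y from x.1) (hmem x), ?_⟩
        apply Subtype.ext
        exact ex.g_desc _ _
    let Ψ := (Abelian.Ext.linearEquiv₀ (R := R)).symm.toLinearMap ∘ₗ (LinearEquiv.ofBijective Φ hΦ).symm.toLinearMap
    refine hom_bridge (S := S) Ψ ?_ ?_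
    · exact (Abelian.Ext.linearEquiv₀ (R := R)).symm.surjective.comp (LinearEquiv.ofBijective Φ hΦ).symm.surjective
    · intro x
      have : S.f.hom = 0 := by
        have : S.f = 0 := C.shape _ _ (by simp)
        rw [this]; rfl
      rw [this]
      simp only [Ψ, LinearMap.comp_apply, LinearEquiv.coe_coe, EmbeddingLike.map_eq_zero_iff]
      constructor
      · rintro rfl; exact ⟨0, rfl⟩
      · rintro ⟨y, hy⟩; exact Subtype.ext hy.symm
  · let S := C.sc' i (i+1) (i+2)
    let e2 := (C.homologyIsoSc' i (i+1) (i+2) (by simp) (by simp)).toLinearEquiv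
    suffices h : Nonempty (S.homology ≃ₗ[R] Abelian.Ext X Y (i+1)) from ⟨e2.trans h.some⟩
    have hmem : ∀ x : LinearMap.ker S.g.hom, P.complex.d (i+2) (i+1) ≫ (show P.complex.X (i+1) ⟶ Y from x.1) = 0 := by
      intro x
      have := x.2
      simp only [S, C, HomologicalComplex.sc'] at this
      exact this
    let Ψ : LinearMap.ker S.g.hom →ₗ[R] Abelian.Ext X Y (i+1) :=
      { toFun := fun x => P.extMk (show P.complex.X (i+1) ⟶ Y from x.1) (i+2) rfl (hmem x)
        map_add' := by
          intro a b
          rw [P.add_extMk]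
          rfl
        map_smul' := by
          intro r a
          rw [RingHom.id_apply, Abelian.Ext.smul_eq_comp_mk₀, P.extMk_comp_mk₀]
          congr 1 }
    refine hom_bridge (S := S) Ψ ?_ ?_
    · intro α
      obtain ⟨f, hf, rfl⟩ := P.extMk_surjective α (i+2) rfl
      refine ⟨⟨f, ?_⟩, rfl⟩
      simp only [S, C, HomologicalComplex.sc']
      exact hf
    · intro x
      refine (P.extMk_eq_zero_iff _ (i+2) rfl (hmem x) i rfl).trans ?_
      simp only [S, C, HomologicalComplex.sc']
      rfl

lemma extM_equiv (i : ℕ) (M N : Type u) [AddCommGroup M] [Module R M]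
    [AddCommGroup N] [Module R N] : Nonempty (extM R i M N ≃ₗ[R] EX R M N i) := ext_bridge i _ _

lemma extM_sub (i : ℕ) (M N : Type u) [AddCommGroup M] [Module R M]
    [AddCommGroup N] [Module R N] : Subsingleton (extM R i M N) ↔ Subsingleton (EX R M N i) :=
  (extM_equiv i M N).some.toEquiv.subsingleton_congr
end bridge
end S6

end

noncomputable section
namespace S6
section dlem
variable {R : Type u} [CommRing R]
variable {M N K X Y Z : Type u} [AddCommGroup M] [Module R M]
  [AddCommGroup N] [Module R N] [AddCommGroup K] [Module R K]
  [AddCommGroup X] [Module R X] [AddCommGroup Y] [Module R Y] [AddCommGroup Z] [Module R Z]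

lemma ker_exact (g : N →ₗ[R] K) : Function.Exact (LinearMap.ker g).subtype g := by
  intro x; simp

lemma dual_inj {g : N →ₗ[R] K} (hg : Function.Surjective g) : Function.Injective g.dualMap :=
  LinearMap.dualMap_injective_of_surjective hg

lemma dual_exact {f : M →ₗ[R] N} {g : N →ₗ[R] K} (h : Function.Exact f g)
    (hg : Function.Surjective g) : Function.Exact g.dualMap f.dualMap := by
  intro φ
  constructor
  · intro hφ
    have hk : LinearMap.ker g ≤ LinearMap.ker φ := by
      intro x hx
      obtain ⟨y, rfl⟩ := (h x).1 hx
      exact LinearMap.congr_fun hφ y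
    let e := g.quotKerEquivOfSurjective hg
    refine ⟨(LinearMap.ker g).liftQ φ hk ∘ₗ e.symm.toLinearMap, ?_⟩
    ext x
    have : e.symm (g x) = Submodule.Quotient.mk x := by
      rw [LinearEquiv.symm_apply_eq]; rfl
    simp [LinearMap.dualMap_apply, this]
  · rintro ⟨ψ, rfl⟩
    ext x
    have := (h (f x)).2 ⟨x, rfl⟩
    simp [LinearMap.dualMap_apply, this]

lemma dual_surj_iff {f : M →ₗ[R] N} {g : N →ₗ[R] K} (h : Function.Exact f g)
    (hf : Function.Injective f) (hg : Function.Surjective g) (h1 : Subsingleton (EX R N R 1)) :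
    Function.Surjective f.dualMap ↔ Subsingleton (EX R K R 1) := by
  obtain ⟨e⟩ := con_ext1 h hf hg h1
  rw [← e.toEquiv.subsingleton_congr, Submodule.Quotient.subsingleton_iff,
    LinearMap.range_eq_top]

lemma dual_single {n : ℕ} : ∑ j : Fin n, (LinearMap.toSpanSingleton R (Module.Dual R (Fin n → R)) (LinearMap.proj j)) ∘ₗ
      (Module.Dual.eval R (Fin n → R) (Pi.single j 1)) = LinearMap.id := by
  classical
  ext φ j
  simp [LinearMap.sum_apply, Pi.single_apply]

lemma sub_dual_free {n i : ℕ} (h : Subsingleton (EX R X R i)) :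
    Subsingleton (EX R X (Module.Dual R (Fin n → R)) i) := by
  refine subsingleton_of_forall_eq 0 fun x => ?_
  rw [← cov_id i x, ← dual_single, cov_sum]
  refine Finset.sum_eq_zero fun j _ => ?_
  rw [← cov_comp, Subsingleton.elim (cov X _ i x) 0, map_zero]

lemma sub_dual_a0 [Module.Finite R Y] (h : Subsingleton (EX R X R 0)) :
    Subsingleton (EX R X (Module.Dual R Y) 0) := by
  obtain ⟨n, π, hπ⟩ := Module.Finite.exists_fin' R Y
  exact cov_van0 (dual_inj hπ) (sub_dual_free h)

/-- factor the map `L* → K*` through its range. -/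
lemma dual_range_exact {f : M →ₗ[R] N} {g : N →ₗ[R] K} (h : Function.Exact f g)
    (hg : Function.Surjective g) : Function.Exact g.dualMap f.dualMap.rangeRestrict := by
  intro φ
  rw [← dual_exact h hg φ]
  exact Subtype.ext_iff

lemma mkQ_exact (W : Submodule R N) : Function.Exact W.subtype W.mkQ := by
  intro x; simp

lemma sub_dual_a1 [IsNoetherianRing R] [Module.Finite R Y] (h : Subsingleton (EX R X R 0))
    (h1 : Subsingleton (EX R X R 1)) :
    Subsingleton (EX R X (Module.Dual R Y) 1) := by
  obtain ⟨n, π, hπ⟩ := Module.Finite.exists_fin' R Y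
  let f := (LinearMap.ker π).subtype
  have hx := ker_exact π
  have hs : Function.Surjective f.dualMap.rangeRestrict := LinearMap.surjective_rangeRestrict _
  refine cov_van1 (K := LinearMap.range f.dualMap) (dual_range_exact hx hπ) (dual_inj hπ) hs 0 ?_
    (sub_dual_free h1)
  exact cov_van0 (Submodule.subtype_injective (LinearMap.range f.dualMap)) (sub_dual_a0 h)

lemma D_a [IsNoetherianRing R] (d : ℕ) (hd : ∀ i < d, Subsingleton (EX R X R i)) (n : ℕ) :
    ∀ (Y : Type u) [AddCommGroup Y] [Module R Y] [Module.Finite R Y],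
      (∀ i, 1 ≤ i → i < n + 1 → Subsingleton (EX R Y R i)) →
      ∀ i < n + 2, i < d → Subsingleton (EX R X (Module.Dual R Y) i) := by
  induction n with
  | zero =>
    intro Y _ _ _ hY i hi hid
    have : i = 0 ∨ i = 1 := by omega
    rcases this with rfl | rfl
    · exact sub_dual_a0 (hd 0 hid)
    · exact sub_dual_a1 (hd 0 (by omega)) (hd 1 hid)
  | succ n ih =>
    intro Y _ _ _ hY i hi hid
    rcases i with _ | i
    · exact sub_dual_a0 (hd 0 hid)
    obtain ⟨a, π, hπ⟩ := Module.Finite.exists_fin' R Y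
    have hx := ker_exact π
    have hi' := Submodule.subtype_injective (LinearMap.ker π)
    have hsurj := (dual_surj_iff hx hi' hπ (ex_proj 0)).2 (hY 1 le_rfl (by omega))
    refine cov_van1 (dual_exact hx hπ) (dual_inj hπ) hsurj i ?_ (sub_dual_free (hd _ hid))
    refine ih _ ?_ i (by omega) (by omega)
    intro j hj hjn
    obtain ⟨j, rfl⟩ : ∃ j', j = j' + 1 := ⟨j - 1, by omega⟩
    obtain ⟨e⟩ := con_shift (Y := R) hx hi' hπ (j+1) (ex_proj j) (ex_proj (j+1))
    have := hY (j+2) (by omega) (by omega)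
    exact e.toEquiv.subsingleton_congr.2 this

lemma D_b [IsNoetherianRing R] (n : ℕ) :
    ∀ (Y : Type u) [AddCommGroup Y] [Module R Y] [Module.Finite R Y],
      (∀ i < n + 3, Subsingleton (EX R X R i)) →
      (∀ i, 1 ≤ i → i < n + 1 → Subsingleton (EX R Y R i)) →
      (Subsingleton (EX R X (EX R Y R (n+1)) 0) ↔
        Subsingleton (EX R X (Module.Dual R Y) (n+2))) := by
  induction n with
  | zero =>
    intro Y _ _ _ hd hY
    obtain ⟨a, π, hπ⟩ := Module.Finite.exists_fin' R Y
    have hx := ker_exact π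
    have hi' := Submodule.subtype_injective (LinearMap.ker π)
    obtain ⟨e⟩ := con_ext1 hx hi' hπ (ex_proj 0)
    rw [← (covEquiv X e 0).toEquiv.subsingleton_congr]
    obtain ⟨e1⟩ := cov_shift (X := X) (mkQ_exact (LinearMap.range (LinearMap.ker π).subtype.dualMap))
      (Submodule.subtype_injective _) (Submodule.mkQ_surjective _) 0
      (sub_dual_a0 (hd 0 (by omega))) (sub_dual_a1 (hd 0 (by omega)) (hd 1 (by omega)))
    rw [e1.toEquiv.subsingleton_congr]
    have hs : Function.Surjective (LinearMap.ker π).subtype.dualMap.rangeRestrict :=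
      LinearMap.surjective_rangeRestrict _
    obtain ⟨e2⟩ := cov_shift (X := X) (K := LinearMap.range (LinearMap.ker π).subtype.dualMap) (dual_range_exact hx hπ) (dual_inj hπ)
      hs 1 (sub_dual_free (hd 1 (by omega)))
      (sub_dual_free (hd 2 (by omega)))
    rw [e2.toEquiv.subsingleton_congr]
  | succ n ih =>
    intro Y _ _ _ hd hY
    obtain ⟨a, π, hπ⟩ := Module.Finite.exists_fin' R Y
    have hx := ker_exact π
    have hi' := Submodule.subtype_injective (LinearMap.ker π)
    have hsurj := (dual_surj_iff hx hi' hπ (ex_proj 0)).2 (hY 1 le_rfl (by omega))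
    obtain ⟨e⟩ := con_shift (Y := R) hx hi' hπ (n+1) (ex_proj n) (ex_proj (n+1))
    rw [← (covEquiv X e 0).toEquiv.subsingleton_congr, ih _ (fun i hi => hd i (by omega))]
    · obtain ⟨e2⟩ := cov_shift (X := X) (dual_exact hx hπ) (dual_inj hπ) hsurj (n+2)
        (sub_dual_free (hd _ (by omega))) (sub_dual_free (hd _ (by omega)))
      rw [e2.toEquiv.subsingleton_congr]
    · intro j hj hjn
      obtain ⟨j, rfl⟩ : ∃ j', j = j' + 1 := ⟨j - 1, by omega⟩
      obtain ⟨e⟩ := con_shift (Y := R) hx hi' hπ (j+1) (ex_proj j) (ex_proj (j+1))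
      have := hY (j+2) (by omega) (by omega)
      exact e.toEquiv.subsingleton_congr.2 this

end dlem
end S6

end

noncomputable section
namespace S6
section loc
variable {R : Type u} [CommRing R] [IsNoetherianRing R]
variable {M N K X Y Z : Type u} [AddCommGroup M] [Module R M]
  [AddCommGroup N] [Module R N] [AddCommGroup K] [Module R K]
  [AddCommGroup X] [Module R X] [AddCommGroup Y] [Module R Y] [AddCommGroup Z] [Module R Z]

lemma k_smul {I : Ideal R} {r : R} (hr : r ∈ I) (i : ℕ) (x : EX R (R ⧸ I) M i) : r • x = 0 := by
  have h : r • (LinearMap.id : (R ⧸ I) →ₗ[R] (R ⧸ I)) = 0 := by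
    ext
    simp only [LinearMap.comp_apply, LinearMap.smul_apply, LinearMap.id_apply, LinearMap.zero_apply]
    rw [← map_smul]
    simpa [Ideal.Quotient.eq_zero_iff_mem] using hr
  rw [← con_id i x, ← con_smul, h, con_zero]

lemma syz_van (hY : ∀ i, 1 ≤ i → Subsingleton (EX R Y R i)) {n : ℕ} {π : (Fin n → R) →ₗ[R] Y}
    (hπ : Function.Surjective π) (i : ℕ) (hi : 1 ≤ i) : Subsingleton (EX R (LinearMap.ker π) R i) := by
  obtain ⟨j, rfl⟩ : ∃ j', i = j' + 1 := ⟨i - 1, by omega⟩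
  obtain ⟨e⟩ := con_shift (Y := R) (ker_exact π) (Submodule.subtype_injective (LinearMap.ker π)) hπ
    (j+1) (ex_proj j) (ex_proj (j+1))
  exact e.toEquiv.subsingleton_congr.2 (hY (j+2) (by omega))

lemma D_all [Module.Finite R Y] {d : ℕ} (hd : ∀ i < d, Subsingleton (EX R X R i))
    (hY : ∀ i, 1 ≤ i → Subsingleton (EX R Y R i)) (i : ℕ) (hi : i < d) :
    Subsingleton (EX R X (Module.Dual R Y) i) :=
  D_a d hd i Y (fun j hj _ => hY j hj) i (by omega) hi

lemma pi_dual_inj [Module.Finite R Y] {d : ℕ} (hd : ∀ i < d, Subsingleton (EX R X R i))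
    (hY : ∀ i, 1 ≤ i → Subsingleton (EX R Y R i)) {n : ℕ} {π : (Fin n → R) →ₗ[R] Y}
    (hπ : Function.Surjective π) : Function.Injective (cov X π.dualMap d) := by
  rcases d with _ | d
  · exact cov_inj0 (dual_inj hπ)
  · have hsurj := (dual_surj_iff (ker_exact π) (Submodule.subtype_injective (LinearMap.ker π)) hπ
      (ex_proj 0)).2 (hY 1 le_rfl)
    exact cov_inj (dual_exact (ker_exact π) hπ) (dual_inj hπ) hsurj d
      (D_all hd (syz_van hY hπ) d (by omega))

lemma rep_inj [Module.Finite R Y] {d : ℕ} (hd : ∀ i < d, Subsingleton (EX R X R i))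
    (hY : ∀ i, 1 ≤ i → Subsingleton (EX R Y R i)) (x : EX R X (Module.Dual R Y) d)
    (hx : ∀ y, cov X (Module.Dual.eval R Y y) d x = 0) : x = 0 := by
  obtain ⟨n, π, hπ⟩ := Module.Finite.exists_fin' R Y
  apply (injective_iff_map_eq_zero _).1 (pi_dual_inj hd hY hπ)
  rw [← cov_id d (cov X π.dualMap d x), ← dual_single, cov_sum]
  refine Finset.sum_eq_zero fun j _ => ?_
  rw [← cov_comp, cov_comp π.dualMap]
  have : Module.Dual.eval R (Fin n → R) (Pi.single j 1) ∘ₗ π.dualMap =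
    Module.Dual.eval R Y (π (Pi.single j 1)) := rfl
  rw [this, hx, map_zero]

lemma rep_surj {I : Ideal R} [Module.Finite R Y] {d : ℕ} (hd : ∀ i < d, Subsingleton (EX R (R ⧸ I) R i))
    (hY : ∀ i, 1 ≤ i → Subsingleton (EX R Y R i)) (φ : Y →ₗ[R] (R ⧸ I)) (v : EX R (R ⧸ I) R d) :
    ∃ x : EX R (R ⧸ I) (Module.Dual R Y) d, ∀ (y : Y) (c : R), Ideal.Quotient.mk I c = φ y →
      cov (R ⧸ I) (Module.Dual.eval R Y y) d x = c • v := by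
  obtain ⟨n, π, hπ⟩ := Module.Finite.exists_fin' R Y
  choose c hc using fun j : Fin n => Ideal.Quotient.mk_surjective (I := I) (φ (π (Pi.single j 1)))
  let w : EX R (R ⧸ I) (Module.Dual R (Fin n → R)) d :=
    ∑ j, c j • cov _ (LinearMap.toSpanSingleton R (Module.Dual R (Fin n → R)) (LinearMap.proj j)) d v
  have hw : ∀ l, cov _ (Module.Dual.eval R (Fin n → R) l) d w = (∑ j, c j * l j) • v := by
    intro l
    simp only [w, map_sum, map_smul, Finset.sum_smul, cov_comp]
    refine Finset.sum_congr rfl fun j _ => ?_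
    have : Module.Dual.eval R (Fin n → R) l ∘ₗ
      LinearMap.toSpanSingleton R (Module.Dual R (Fin n → R)) (LinearMap.proj j) = l j • LinearMap.id := by
      ext; simp
    rw [this, cov_smul, cov_id, mul_smul]
  have hsum : ∀ l, Ideal.Quotient.mk I (∑ j, c j * l j) = φ (π l) := by
    intro l
    have hl : l = ∑ j, l j • (Pi.single j 1 : Fin n → R) := by
      ext i; simp [Finset.sum_apply, Pi.single_apply]
    conv_rhs => rw [hl]
    simp only [map_sum, map_smul, map_mul, hc]
    refine Finset.sum_congr rfl fun j _ => ?_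
    rw [mul_comm, Algebra.smul_def]
    rfl
  have hker : cov (R ⧸ I) (LinearMap.ker π).subtype.dualMap d w = 0 := by
    refine rep_inj hd (syz_van hY hπ) _ fun y => ?_
    rw [cov_comp]
    have : Module.Dual.eval R (LinearMap.ker π) y ∘ₗ (LinearMap.ker π).subtype.dualMap =
      Module.Dual.eval R (Fin n → R) y.1 := rfl
    rw [this, hw]
    apply k_smul
    rw [← Ideal.Quotient.eq_zero_iff_mem, hsum, LinearMap.mem_ker.1 y.2, map_zero]
  have hsurj := (dual_surj_iff (ker_exact π) (Submodule.subtype_injective (LinearMap.ker π)) hπ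
      (ex_proj 0)).2 (hY 1 le_rfl)
  obtain ⟨x, hx⟩ := (cov_exact (dual_exact (ker_exact π) hπ) (dual_inj hπ) hsurj d w).1 hker
  refine ⟨x, fun y a ha => ?_⟩
  obtain ⟨l, rfl⟩ := hπ y
  have : Module.Dual.eval R Y (π l) = Module.Dual.eval R (Fin n → R) l ∘ₗ π.dualMap := rfl
  rw [this, ← cov_comp, hx, hw, ← sub_eq_zero, ← sub_smul]
  apply k_smul
  rw [← Ideal.Quotient.eq_zero_iff_mem, map_sub, hsum, ha, sub_self]

lemma gz_iff : IsGDimZero R M ↔ Module.Finite R M ∧ Function.Bijective (Module.Dual.eval R M) ∧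
    (∀ i : ℕ, 1 ≤ i → Subsingleton (EX R M R i)) ∧
    (∀ i : ℕ, 1 ≤ i → Subsingleton (EX R (Module.Dual R M) R i)) := by
  simp only [IsGDimZero, extM_sub]
  rfl

lemma gz_congr (e : M ≃ₗ[R] N) (h : IsGDimZero R M) : IsGDimZero R N := by
  rw [gz_iff] at h ⊢
  obtain ⟨h1, h2, h3, h4⟩ := h
  refine ⟨Module.Finite.equiv e, ?_, fun i hi => ?_, fun i hi => ?_⟩
  · have : ⇑(Module.Dual.eval R N) = e.symm.dualMap.symm.dualMap ∘ Module.Dual.eval R M ∘ e.symm := by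
      ext x φ
      simp [LinearEquiv.dualMap_apply, LinearMap.dualMap_apply]
    rw [this]
    exact e.symm.dualMap.symm.dualMap.bijective.comp (h2.comp e.symm.bijective)
  · have := h3 i hi
    exact (conEquiv R e i).toEquiv.subsingleton
  · have := h4 i hi
    exact (conEquiv R e.dualMap i).symm.toEquiv.subsingleton

lemma gz_depth (h : IsGDimZero R M) {d : ℕ} (hd : ∀ i < d, Subsingleton (EX R X R i)) (i : ℕ) (hi : i < d) :
    Subsingleton (EX R X M i) := by
  obtain ⟨h1, h2, h3, h4⟩ := gz_iff.1 h
  have := D_all hd h4 i hi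
  exact (covEquiv X (LinearEquiv.ofBijective _ h2) i).toEquiv.subsingleton

lemma exists_to_k [IsLocalRing R] [Module.Finite R M] [Nontrivial M] :
    ∃ φ : M →ₗ[R] (R ⧸ IsLocalRing.maximalIdeal R), Function.Surjective φ := by
  obtain ⟨N, hN, -⟩ := (eq_top_or_exists_le_coatom (⊥ : Submodule R M)).resolve_left bot_ne_top
  have : IsSimpleModule R (M ⧸ N) := isSimpleModule_iff_isCoatom.2 hN
  obtain ⟨I, hI, ⟨e⟩⟩ := isSimpleModule_iff_quot_maximal.1 this
  obtain rfl := IsLocalRing.eq_maximalIdeal hI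
  exact ⟨e.toLinearMap ∘ₗ N.mkQ, e.surjective.comp N.mkQ_surjective⟩

lemma gz_coker {f : M →ₗ[R] N} {g : N →ₗ[R] K} (h : Function.Exact f g)
    (hf : Function.Injective f) (hg : Function.Surjective g) (hM : IsGDimZero R M)
    (hN : IsGDimZero R N) (hs : Function.Surjective f.dualMap) : IsGDimZero R K := by
  obtain ⟨m1, m2, m3, m4⟩ := gz_iff.1 hM
  obtain ⟨n1, n2, n3, n4⟩ := gz_iff.1 hN
  have hss : Function.Surjective g.dualMap.dualMap :=
    (dual_surj_iff (dual_exact h hg) (dual_inj hg) hs (n4 1 le_rfl)).2 (m4 1 le_rfl)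
  have hee := dual_exact (dual_exact h hg) hs
  have nat1 : ∀ x, f.dualMap.dualMap (Module.Dual.eval R M x) = Module.Dual.eval R N (f x) :=
    fun _ => rfl
  have nat2 : ∀ x, g.dualMap.dualMap (Module.Dual.eval R N x) = Module.Dual.eval R K (g x) :=
    fun _ => rfl
  refine gz_iff.2 ⟨Module.Finite.of_surjective g hg, ⟨?_, ?_⟩, fun i hi => ?_, fun i hi => ?_⟩
  · rw [injective_iff_map_eq_zero]
    intro x hx
    obtain ⟨y, rfl⟩ := hg x
    rw [← nat2] at hx
    obtain ⟨z, hz⟩ := (hee _).1 hx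
    obtain ⟨w, rfl⟩ := m2.2 z
    rw [nat1] at hz
    rw [← n2.1 hz]
    exact (h _).2 ⟨w, rfl⟩
  · intro z
    obtain ⟨y, rfl⟩ := hss z
    obtain ⟨x, rfl⟩ := n2.2 y
    exact ⟨g x, (nat2 x).symm⟩
  · rcases hi.eq_or_lt with rfl | hi
    · exact (dual_surj_iff h hf hg (n3 1 le_rfl)).1 hs
    · obtain ⟨j, rfl⟩ : ∃ j', i = j' + 1 := ⟨i - 1, by omega⟩
      obtain ⟨δ, e1, e2⟩ := con_delta R h hf hg j
      exact sub_mid e2 (m3 j (by omega)) (n3 _ (by omega))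
  · obtain ⟨δ, e1, e2⟩ := con_delta R (dual_exact h hg) (dual_inj hg) hs i
    exact sub_mid e1 (n4 i hi) (m4 (i+1) (by omega))

lemma gz_step [IsLocalRing R] {d : ℕ}
    (hd : ∀ i < d, Subsingleton (EX R (R ⧸ IsLocalRing.maximalIdeal R) R i))
    (hd' : ¬ Subsingleton (EX R (R ⧸ IsLocalRing.maximalIdeal R) R d))
    {f : M →ₗ[R] N} {g : N →ₗ[R] K} (h : Function.Exact f g)
    (hf : Function.Injective f) (hg : Function.Surjective g) (hM : IsGDimZero R M)
    (hN : IsGDimZero R N)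
    (hK : ∀ i < d, Subsingleton (EX R (R ⧸ IsLocalRing.maximalIdeal R) K i)) : IsGDimZero R K := by
  refine gz_coker h hf hg hM hN ?_
  obtain ⟨m1, m2, m3, m4⟩ := gz_iff.1 hM
  obtain ⟨n1, n2, n3, n4⟩ := gz_iff.1 hN
  by_contra hns
  rw [← LinearMap.range_eq_top] at hns
  have : Nontrivial (Module.Dual R M ⧸ LinearMap.range f.dualMap) :=
    Submodule.Quotient.nontrivial_iff.2 hns
  obtain ⟨φ0, hφ0⟩ := exists_to_k (R := R) (M := Module.Dual R M ⧸ LinearMap.range f.dualMap)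
  let φ := φ0 ∘ₗ (LinearMap.range f.dualMap).mkQ
  have hφs : Function.Surjective φ := hφ0.comp (Submodule.mkQ_surjective _)
  rw [not_subsingleton_iff_nontrivial] at hd'
  obtain ⟨v, hv⟩ := exists_ne (0 : EX R (R ⧸ IsLocalRing.maximalIdeal R) R d)
  obtain ⟨x, hx⟩ := rep_surj hd m4 φ v
  have hx0 : cov _ f.dualMap.dualMap d x = 0 := by
    refine rep_inj hd n4 _ fun y => ?_
    rw [cov_comp]
    have : Module.Dual.eval R (Module.Dual R N) y ∘ₗ f.dualMap.dualMap =
      Module.Dual.eval R (Module.Dual R M) (f.dualMap y) := rfl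
    rw [this, hx (f.dualMap y) 0, zero_smul]
    have : (LinearMap.range f.dualMap).mkQ (f.dualMap y) = 0 := by simp
    simp [φ, this]
  have hinj : Function.Injective (cov (R ⧸ IsLocalRing.maximalIdeal R) f d) := by
    rcases d with _ | d
    · exact cov_inj0 hf
    · exact cov_inj h hf hg d (hK d (by omega))
  have hx' : x = 0 := by
    obtain ⟨z, rfl⟩ := (covEquiv _ (LinearEquiv.ofBijective _ m2) d).surjective x
    have h1 : cov _ f.dualMap.dualMap d (cov (R ⧸ IsLocalRing.maximalIdeal R) (Module.Dual.eval R M) d z) = 0 := hx0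
    rw [cov_comp] at h1
    have : f.dualMap.dualMap ∘ₗ Module.Dual.eval R M = Module.Dual.eval R N ∘ₗ f := rfl
    rw [this, ← cov_comp] at h1
    have h2 := (covEquiv (R ⧸ IsLocalRing.maximalIdeal R) (LinearEquiv.ofBijective _ n2) d).injective
      (h1.trans (map_zero _).symm)
    have : z = 0 := (injective_iff_map_eq_zero _).1 hinj z h2
    rw [this, map_zero]
  obtain ⟨y, hy⟩ := hφs (Ideal.Quotient.mk _ 1)
  have := hx y 1 hy.symm
  rw [hx', map_zero, one_smul] at this
  exact hv this.symm

lemma AB_half [IsLocalRing R] {d : ℕ}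
    (hd : ∀ i < d, Subsingleton (EX R (R ⧸ IsLocalRing.maximalIdeal R) R i))
    (hd' : ¬ Subsingleton (EX R (R ⧸ IsLocalRing.maximalIdeal R) R d)) (n : ℕ) :
    ∀ M : ModuleCat.{u} R, GDimLE R n M →
      (∀ i < d, Subsingleton (EX R (R ⧸ IsLocalRing.maximalIdeal R) M i)) → IsGDimZero R M := by
  induction n with
  | zero => intro M h _; exact h
  | succ n ih =>
    rintro M ⟨G, f, hG, hf, hK⟩ hM
    have hK0 := ih _ hK fun i hi => by
      rcases i with _ | i
      · exact cov_van0 (Submodule.subtype_injective _) (gz_depth hG hd 0 hi)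
      · exact cov_van1 (ker_exact f) (Submodule.subtype_injective _) hf i (hM i (by omega))
          (gz_depth hG hd _ hi)
    exact gz_step hd hd' (ker_exact f) (Submodule.subtype_injective _) hf hK0 hG hM

lemma exists_depth_aux [IsLocalRing R] (N : Ideal R) : N ≠ ⊤ →
    ∃ i, ¬ Subsingleton (EX R (R ⧸ IsLocalRing.maximalIdeal R) (R ⧸ N) i) := by
  induction N using WellFoundedGT.induction with
  | ind N ih =>
  intro hN
  by_contra! hc
  have hNm := IsLocalRing.le_maximalIdeal hN
  have h0 : Subsingleton ((R ⧸ IsLocalRing.maximalIdeal R) →ₗ[R] (R ⧸ N)) :=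
    have := hc 0
    (ex0 _ _).symm.toEquiv.subsingleton
  obtain ⟨x, hx, hreg⟩ := IsSMulRegular.subsingleton_linearMap_iff.1 h0
  rw [Ideal.annihilator_quotient] at hx
  have hxN : x ∉ N := by
    intro hxN
    have h1 : x • (Ideal.Quotient.mk N 1) = x • (0 : R ⧸ N) := by
      rw [smul_zero, ← Ideal.Quotient.mk_eq_mk, ← Submodule.Quotient.mk_smul,
        Submodule.Quotient.mk_eq_zero]
      simpa using hxN
    have := hreg h1
    rw [Ideal.Quotient.eq_zero_iff_mem] at this
    exact hN ((Ideal.eq_top_iff_one _).2 this)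
  have hle : N ≤ N ⊔ Ideal.span {x} := le_sup_left
  have hlt : N < N ⊔ Ideal.span {x} := by
    refine lt_of_le_of_ne hle fun h => hxN ?_
    rw [h]
    exact Ideal.mem_sup_right (Ideal.mem_span_singleton_self x)
  have hne : N ⊔ Ideal.span {x} ≠ ⊤ := by
    intro h
    have : N ⊔ Ideal.span {x} ≤ IsLocalRing.maximalIdeal R :=
      sup_le hNm ((Ideal.span_singleton_le_iff_mem _).2 hx)
    rw [h, top_le_iff] at this
    exact (IsLocalRing.maximalIdeal.isMaximal R).ne_top this
  obtain ⟨i, hi⟩ := ih _ hlt hne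
  let f : (R ⧸ N) →ₗ[R] (R ⧸ N) := x • LinearMap.id
  let g : (R ⧸ N) →ₗ[R] (R ⧸ (N ⊔ Ideal.span {x})) := Submodule.factor hle
  have hg : Function.Surjective g := Submodule.factor_surjective hle
  have hex : Function.Exact f g := by
    intro y
    obtain ⟨a, rfl⟩ := Submodule.mkQ_surjective _ y
    constructor
    · intro h
      have h' : a ∈ N ⊔ Ideal.span {x} := by
        rw [← Submodule.Quotient.mk_eq_zero]; exact h
      obtain ⟨b, hb, c, hc, rfl⟩ := Submodule.mem_sup.1 h'
      obtain ⟨e, rfl⟩ := Ideal.mem_span_singleton'.1 hc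
      refine ⟨N.mkQ e, ?_⟩
      change x • N.mkQ e = _
      rw [← map_smul, map_add]
      have : N.mkQ b = 0 := (Submodule.Quotient.mk_eq_zero N).2 hb
      rw [this, zero_add, smul_eq_mul, mul_comm]
    · rintro ⟨z, hz⟩
      obtain ⟨e, rfl⟩ := Submodule.mkQ_surjective _ z
      rw [← hz]
      change (Submodule.Quotient.mk (x • e) : R ⧸ (N ⊔ Ideal.span {x})) = 0
      rw [Submodule.Quotient.mk_eq_zero, smul_eq_mul]
      exact Ideal.mul_mem_right _ _ (Ideal.mem_sup_right (Ideal.mem_span_singleton_self x))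
  obtain ⟨δ, e1, e2⟩ := cov_delta (R ⧸ IsLocalRing.maximalIdeal R) hex hreg hg i
  exact hi (sub_mid e1 (hc i) (hc (i+1)))

lemma exists_depth [IsLocalRing R] :
    ∃ d, (∀ i < d, Subsingleton (EX R (R ⧸ IsLocalRing.maximalIdeal R) R i)) ∧
      ¬ Subsingleton (EX R (R ⧸ IsLocalRing.maximalIdeal R) R d) := by
  classical
  obtain ⟨i, hi⟩ := exists_depth_aux (⊥ : Ideal R) bot_ne_top
  have hex : ∃ i, ¬ Subsingleton (EX R (R ⧸ IsLocalRing.maximalIdeal R) R i) :=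
    ⟨i, fun h => hi ((covEquiv _ (Submodule.quotEquivOfEqBot (⊥ : Submodule R R) rfl) i).toEquiv.subsingleton)⟩
  exact ⟨Nat.find hex, fun j hj => not_not.1 (Nat.find_min hex hj), Nat.find_spec hex⟩
end loc
end S6

end

noncomputable section
namespace S6
set_option linter.unusedSectionVars false
section lcz
variable {R A : Type u} [CommRing R] [CommRing A] [Algebra R A] (S : Submonoid R) [IsLocalization S A]
variable {X Y Z X' Y' Z' : Type u} [AddCommGroup X] [Module R X]
  [AddCommGroup Y] [Module R Y] [AddCommGroup Z] [Module R Z]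
  [AddCommGroup X'] [Module R X'] [Module A X'] [IsScalarTower R A X']
  [AddCommGroup Y'] [Module R Y'] [Module A Y'] [IsScalarTower R A Y']
  [AddCommGroup Z'] [Module R Z'] [Module A Z'] [IsScalarTower R A Z']
  (lX : X →ₗ[R] X') (lY : Y →ₗ[R] Y') (lZ : Z →ₗ[R] Z')
  [IsLocalizedModule S lX] [IsLocalizedModule S lY] [IsLocalizedModule S lZ]

lemma sq_eq {g : X →ₗ[R] Y} {gA : X' →ₗ[A] Y'} (hsq : ∀ x, gA (lX x) = lY (g x)) :
    gA.restrictScalars R = IsLocalizedModule.map S lX lY g := by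
  apply IsLocalizedModule.linearMap_ext S lX lY
  ext x
  simp [hsq]

lemma sq_fun {g : X →ₗ[R] Y} {gA : X' →ₗ[A] Y'} (hsq : ∀ x, gA (lX x) = lY (g x)) :
    ⇑gA = ⇑(IsLocalizedModule.map S lX lY g) := by
  rw [← sq_eq S lX lY hsq]; rfl

lemma lin_ext (S : Submonoid R) [IsLocalization S A] (lX : X →ₗ[R] X') [IsLocalizedModule S lX]
    {f g : X' →ₗ[A] Y'} (h : ∀ x, f (lX x) = g (lX x)) (lY : Y →ₗ[R] Y') [IsLocalizedModule S lY] : f = g := by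
  have : f.restrictScalars R = g.restrictScalars R := by
    apply IsLocalizedModule.linearMap_ext S lX lY
    ext x
    simp [h]
  ext x
  exact LinearMap.congr_fun this x

lemma loc_inj (S : Submonoid R) [IsLocalization S A] (lX : X →ₗ[R] X') (lY : Y →ₗ[R] Y') [IsLocalizedModule S lX] [IsLocalizedModule S lY]
    {g : X →ₗ[R] Y} {gA : X' →ₗ[A] Y'} (hsq : ∀ x, gA (lX x) = lY (g x))
    (h : Function.Injective g) : Function.Injective gA := by
  rw [sq_fun S lX lY hsq]; exact IsLocalizedModule.map_injective S lX lY g h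

lemma loc_surj (S : Submonoid R) [IsLocalization S A] (lX : X →ₗ[R] X') (lY : Y →ₗ[R] Y') [IsLocalizedModule S lX] [IsLocalizedModule S lY]
    {g : X →ₗ[R] Y} {gA : X' →ₗ[A] Y'} (hsq : ∀ x, gA (lX x) = lY (g x))
    (h : Function.Surjective g) : Function.Surjective gA := by
  rw [sq_fun S lX lY hsq]; exact IsLocalizedModule.map_surjective S lX lY g h

lemma loc_exact (S : Submonoid R) [IsLocalization S A] (lX : X →ₗ[R] X') (lY : Y →ₗ[R] Y') (lZ : Z →ₗ[R] Z') [IsLocalizedModule S lX] [IsLocalizedModule S lY] [IsLocalizedModule S lZ]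
    {g : X →ₗ[R] Y} {gA : X' →ₗ[A] Y'} (hsq : ∀ x, gA (lX x) = lY (g x))
    {h : Y →ₗ[R] Z} {hA : Y' →ₗ[A] Z'} (hsq' : ∀ x, hA (lY x) = lZ (h x))
    (hex : Function.Exact g h) : Function.Exact gA hA := by
  rw [sq_fun S lX lY hsq, sq_fun S lY lZ hsq']; exact IsLocalizedModule.map_exact S lX lY lZ g h hex

variable (A) in
lemma exists_map (S : Submonoid R) [IsLocalization S A] (lX : X →ₗ[R] X') (lY : Y →ₗ[R] Y') [IsLocalizedModule S lX] [IsLocalizedModule S lY]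
    (g : X →ₗ[R] Y) : ∃ gA : X' →ₗ[A] Y', ∀ x, gA (lX x) = lY (g x) :=
  ⟨IsLocalizedModule.mapExtendScalars S lX lY A g, fun x => by simp⟩

variable (A) in
/-- localization of the dual -/
def dl : Module.Dual R X →ₗ[R] Module.Dual A X' :=
  IsLocalizedModule.mapExtendScalars S lX (Algebra.linearMap R A) A

lemma dl_apply (φ : Module.Dual R X) (x : X) : dl A S lX φ (lX x) = algebraMap R A (φ x) := by
  simp [dl]

instance dl_loc [Module.FinitePresentation R X] : IsLocalizedModule S (dl A S lX) :=
  Module.FinitePresentation.isLocalizedModule_mapExtendScalars _ _ _ _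

lemma dl_ext (S : Submonoid R) [IsLocalization S A] (lX : X →ₗ[R] X') [IsLocalizedModule S lX]
    {f g : Module.Dual A X'} (h : ∀ x, f (lX x) = g (lX x)) : f = g :=
  lin_ext S lX h (Algebra.linearMap R A)

lemma dl_sq {g : X →ₗ[R] Y} {gA : X' →ₗ[A] Y'} (hsq : ∀ x, gA (lX x) = lY (g x)) (φ : Module.Dual R Y) :
    gA.dualMap (dl A S lY φ) = dl A S lX (g.dualMap φ) := by
  apply dl_ext S lX
  intro x
  simp [LinearMap.dualMap_apply, hsq, dl_apply]

lemma eval_sq [Module.FinitePresentation R X] (x : X) :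
    Module.Dual.eval A X' (lX x) = dl A S (dl A S lX) (Module.Dual.eval R X x) := by
  apply dl_ext S (dl A S lX)
  intro φ
  rw [dl_apply]
  simp [dl_apply]

/-- two localizations agree -/
lemma loc_unique {E E1 E2 : Type u} [AddCommGroup E] [Module R E] [AddCommGroup E1] [Module R E1] [Module A E1]
    [IsScalarTower R A E1] [AddCommGroup E2] [Module R E2] [Module A E2] [IsScalarTower R A E2]
    (l1 : E →ₗ[R] E1) (l2 : E →ₗ[R] E2) [IsLocalizedModule S l1] [IsLocalizedModule S l2] :
    Nonempty (E1 ≃ₗ[A] E2) :=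
  ⟨(IsLocalizedModule.linearEquiv S l1 l2).extendScalarsOfIsLocalization S A⟩

lemma loc_congr (S : Submonoid R) {E1 E2 E' : Type u} [AddCommGroup E1] [Module R E1] [AddCommGroup E2] [Module R E2]
    [AddCommGroup E'] [Module R E']
    (e : E1 ≃ₗ[R] E2) (l : E2 →ₗ[R] E') [IsLocalizedModule S l] : IsLocalizedModule S (l ∘ₗ e.toLinearMap) :=
  IsLocalizedModule.of_linearEquiv_right S l e

lemma loc_coker (S : Submonoid R) [IsLocalization S A] (lX : X →ₗ[R] X') (lY : Y →ₗ[R] Y') [IsLocalizedModule S lX] [IsLocalizedModule S lY]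
    {g : X →ₗ[R] Y} {gA : X' →ₗ[A] Y'} (hsq : ∀ x, gA (lX x) = lY (g x))
    {E' : Type u} [AddCommGroup E'] [Module R E'] [Module A E'] [IsScalarTower R A E']
    (l : (Y ⧸ LinearMap.range g) →ₗ[R] E') [IsLocalizedModule S l] :
    Nonempty ((Y' ⧸ LinearMap.range gA) ≃ₗ[A] E') := by
  have h : (LinearMap.range g).localized' A S lY = LinearMap.range gA := by
    rw [LinearMap.localized'_range_eq_range_localizedMap A S lX lY g]
    ext y
    simp only [LinearMap.mem_range]
    rw [sq_fun S lX lY hsq]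
    rfl
  obtain ⟨e⟩ := loc_unique (A := A) S ((LinearMap.range g).toLocalizedQuotient' A S lY) l
  exact ⟨(Submodule.quotEquivOfEq _ _ h.symm).trans e⟩

lemma loc_ext [IsNoetherianRing R] (i : ℕ) : ∀ {X X' : Type u} [AddCommGroup X] [Module R X]
  [AddCommGroup X'] [Module R X'] [Module A X'] [IsScalarTower R A X']
  (lX : X →ₗ[R] X') [IsLocalizedModule S lX] [Module.Finite R X]
  {E' : Type u} [AddCommGroup E'] [Module R E'] [Module A E'] [IsScalarTower R A E']
    (l : EX R X R (i+1) →ₗ[R] E') [IsLocalizedModule S l],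
    Nonempty (EX A X' A (i+1) ≃ₗ[A] E') := by
  induction i with
  | zero =>
    intro X X' _ _ _ _ _ _ lX _ _ E' _ _ _ _ l _
    obtain ⟨n, π, hπ⟩ := Module.Finite.exists_fin' R X
    let lF : (Fin n → R) →ₗ[R] (Fin n → A) := .pi fun i => (Algebra.linearMap R A).comp (.proj i)
    let lK := Submodule.toLocalized' A S lF (LinearMap.ker π)
    obtain ⟨πA, hπA⟩ := exists_map A S lF lX π
    have hFP : Module.FinitePresentation R (LinearMap.ker π) := Module.finitePresentation_of_finite _ _
    have hsub : ∀ x, ((LinearMap.ker π).localized' A S lF).subtype (lK x) = lF ((LinearMap.ker π).subtype x) :=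
      fun _ => rfl
    obtain ⟨e1⟩ := con_ext1 (ker_exact π) (Submodule.subtype_injective _) hπ (ex_proj 0)
    obtain ⟨e2⟩ := con_ext1 (loc_exact S lK lF lX hsub hπA (ker_exact π)) (Submodule.subtype_injective _)
      (loc_surj S lF lX hπA hπ) (ex_proj 0)
    have := loc_congr S e1 l
    obtain ⟨e3⟩ := loc_coker S (dl A S lF) (dl A S lK) (dl_sq S lK lF hsub) (l ∘ₗ e1.toLinearMap)
    exact ⟨e2.symm.trans e3⟩
  | succ i ih =>
    intro X X' _ _ _ _ _ _ lX _ _ E' _ _ _ _ l _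
    obtain ⟨n, π, hπ⟩ := Module.Finite.exists_fin' R X
    let lF : (Fin n → R) →ₗ[R] (Fin n → A) := .pi fun i => (Algebra.linearMap R A).comp (.proj i)
    let lK := Submodule.toLocalized' A S lF (LinearMap.ker π)
    obtain ⟨πA, hπA⟩ := exists_map A S lF lX π
    have hsub : ∀ x, ((LinearMap.ker π).localized' A S lF).subtype (lK x) = lF ((LinearMap.ker π).subtype x) :=
      fun _ => rfl
    obtain ⟨e1⟩ := con_shift (Y := R) (ker_exact π) (Submodule.subtype_injective _) hπ (i+1) (ex_proj i) (ex_proj (i+1))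
    obtain ⟨e2⟩ := con_shift (Y := A) (loc_exact S lK lF lX hsub hπA (ker_exact π)) (Submodule.subtype_injective _)
      (loc_surj S lF lX hπA hπ) (i+1) (ex_proj i) (ex_proj (i+1))
    have := loc_congr S e1 l
    obtain ⟨e3⟩ := ih lK (l ∘ₗ e1.toLinearMap)
    exact ⟨e2.symm.trans e3⟩

end lcz
end S6

end

noncomputable section
namespace S6
set_option linter.unusedSectionVars false
section s1
variable (R : Type u) [CommRing R] (M : Type u) [AddCommGroup M] [Module R M]

/-- the modules `Ext^{s+1}(λ M, R)` -/
def Et : ℕ → ModuleCat.{u} R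
  | 0 => ModuleCat.of R (Module.Dual R (Module.Dual R M) ⧸ LinearMap.range (Module.Dual.eval R M))
  | s + 1 => ModuleCat.of R (EX R (Module.Dual R M) R (s + 1))

variable {R M}
lemma Et_zero (h : Subsingleton (Et R M 0)) : Function.Surjective (Module.Dual.eval R M) := by
  rw [← LinearMap.range_eq_top]
  exact Submodule.Quotient.subsingleton_iff.1 h

lemma Et_gz [IsNoetherianRing R] (h : IsGDimZero R M) (s : ℕ) : Subsingleton (Et R M s) := by
  obtain ⟨h1, h2, h3, h4⟩ := gz_iff.1 h
  rcases s with _ | s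
  · exact Submodule.Quotient.subsingleton_iff.2 (LinearMap.range_eq_top.2 h2.2)
  · exact h4 (s+1) (by omega)

lemma local_lemma [IsNoetherianRing R] [IsLocalRing R] [Module.Finite R M] {d : ℕ}
    (hd : ∀ i < d, Subsingleton (EX R (R ⧸ IsLocalRing.maximalIdeal R) R i))
    (hM : ¬ ∀ i < d, Subsingleton (EX R (R ⧸ IsLocalRing.maximalIdeal R) M i))
    (hinj : Function.Injective (Module.Dual.eval R M)) (s : ℕ)
    (hs : ∀ i < s, Subsingleton (Et R M i)) :
    (∀ i < s + 1, Subsingleton (EX R (R ⧸ IsLocalRing.maximalIdeal R) M i)) ∧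
    (Subsingleton (EX R (R ⧸ IsLocalRing.maximalIdeal R) M (s+1)) ↔
      Subsingleton (EX R (R ⧸ IsLocalRing.maximalIdeal R) (Et R M s) 0)) := by
  rcases s with _ | s
  · have hd0 : 0 < d := by
      by_contra h
      exact hM fun i hi => by omega
    have h0 : Subsingleton (EX R (R ⧸ IsLocalRing.maximalIdeal R) (Module.Dual R (Module.Dual R M)) 0) :=
      sub_dual_a0 (hd 0 hd0)
    have h1 : ∀ i < 0 + 1, Subsingleton (EX R (R ⧸ IsLocalRing.maximalIdeal R) M i) := by
      intro i hi
      obtain rfl : i = 0 := by omega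
      exact cov_van0 hinj h0
    refine ⟨h1, ?_⟩
    have hd1 : 1 < d := by
      by_contra h
      exact hM fun i hi => h1 i (by omega)
    obtain ⟨e⟩ := cov_shift (X := R ⧸ IsLocalRing.maximalIdeal R)
      (LinearMap.exact_map_mkQ_range (Module.Dual.eval R M)) hinj (Submodule.mkQ_surjective _) 0
      h0 (sub_dual_a1 (hd 0 hd0) (hd 1 hd1))
    exact e.toEquiv.subsingleton_congr.symm
  · have hb : Function.Bijective (Module.Dual.eval R M) := ⟨hinj, Et_zero (hs 0 (by omega))⟩
    let e := LinearEquiv.ofBijective _ hb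
    have hc : ∀ i, Subsingleton (EX R (R ⧸ IsLocalRing.maximalIdeal R) M i) ↔
      Subsingleton (EX R (R ⧸ IsLocalRing.maximalIdeal R) (Module.Dual R (Module.Dual R M)) i) :=
      fun i => (covEquiv _ e i).toEquiv.subsingleton_congr
    have hY : ∀ i, 1 ≤ i → i < s + 1 → Subsingleton (EX R (Module.Dual R M) R i) := by
      intro i h1 h2
      obtain ⟨j, rfl⟩ : ∃ j, i = j + 1 := ⟨i - 1, by omega⟩
      exact hs (j+1) (by omega)
    have h1 : ∀ i < s + 2, i < d → Subsingleton (EX R (R ⧸ IsLocalRing.maximalIdeal R) M i) :=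
      fun i hi hid => (hc i).2 (D_a d hd s _ hY i hi hid)
    have hd1 : s + 2 < d := by
      by_contra h
      exact hM fun i hi => h1 i (by omega) hi
    refine ⟨fun i hi => h1 i hi (by omega), ?_⟩
    rw [hc]
    exact (D_b s _ (fun i hi => hd i (by omega)) hY).symm

lemma ass_iff [IsNoetherianRing R] [IsLocalRing R] :
    Subsingleton (EX R (R ⧸ IsLocalRing.maximalIdeal R) M 0) ↔
      ¬ IsAssociatedPrime (IsLocalRing.maximalIdeal R) M := by
  rw [(ex0 (R ⧸ IsLocalRing.maximalIdeal R) M).toEquiv.subsingleton_congr,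
    isAssociatedPrime_iff_exists_injective_linearMap]
  constructor
  · rintro h ⟨-, f, hf⟩
    have : f = 0 := Subsingleton.elim _ _
    have h1 : (1 : R ⧸ IsLocalRing.maximalIdeal R) = 0 := hf (by simp [this])
    exact one_ne_zero h1
  · intro h
    refine subsingleton_of_forall_eq 0 fun f => ?_
    by_contra hf
    refine h ⟨inferInstance, f, ?_⟩
    have : IsSimpleModule R (R ⧸ IsLocalRing.maximalIdeal R) :=
      isSimpleModule_iff_isCoatom.2 (Ideal.isMaximal_def.1 inferInstance)
    exact (LinearMap.injective_or_eq_zero f).resolve_right hf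
end s1

section s2
variable {R A : Type u} [CommRing R] [CommRing A] [Algebra R A] (S : Submonoid R) [IsLocalization S A]
  [IsNoetherianRing R]
variable {X X' : Type u} [AddCommGroup X] [Module R X]
  [AddCommGroup X'] [Module R X'] [Module A X'] [IsScalarTower R A X']
  (lX : X →ₗ[R] X') [IsLocalizedModule S lX]

lemma loc_ext_van (S : Submonoid R) [IsLocalization S A] (lX : X →ₗ[R] X') [IsLocalizedModule S lX] [Module.Finite R X] (i : ℕ) (h : Subsingleton (EX R X R (i+1))) :
    Subsingleton (EX A X' A (i+1)) := by
  have : IsLocalizedModule S (0 : EX R X R (i+1) →ₗ[R] PUnit.{u+1}) := by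
    refine ⟨fun x => ?_, fun y => ⟨(0, 1), Subsingleton.elim _ _⟩, fun _ => ⟨1, Subsingleton.elim _ _⟩⟩
    rw [Module.End.isUnit_iff]
    exact ⟨fun _ _ _ => Subsingleton.elim _ _, fun _ => ⟨0, Subsingleton.elim _ _⟩⟩
  obtain ⟨e⟩ := loc_ext (A := A) S i lX (0 : EX R X R (i+1) →ₗ[R] PUnit.{u+1})
  exact e.toEquiv.subsingleton

lemma loc_eval_inj (S : Submonoid R) [IsLocalization S A] (lX : X →ₗ[R] X') [IsLocalizedModule S lX] [Module.Finite R X]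
    (h : Function.Injective (Module.Dual.eval R X)) : Function.Injective (Module.Dual.eval A X') := by
  have : Module.FinitePresentation R X := Module.finitePresentation_of_finite _ _
  have : Module.FinitePresentation R (Module.Dual R X) := Module.finitePresentation_of_finite _ _
  exact loc_inj S lX (dl A S (dl A S lX)) (eval_sq S lX) h

lemma gz_loc (S : Submonoid R) [IsLocalization S A] (lX : X →ₗ[R] X') [IsLocalizedModule S lX]
    (h : IsGDimZero R X) : IsGDimZero A X' := by
  have : IsNoetherianRing A := IsLocalization.isNoetherianRing S A inferInstance
  obtain ⟨h1, h2, h3, h4⟩ := gz_iff.1 h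
  have : Module.FinitePresentation R X := Module.finitePresentation_of_finite _ _
  have : Module.FinitePresentation R (Module.Dual R X) := Module.finitePresentation_of_finite _ _
  refine gz_iff.2 ⟨Module.Finite.of_isLocalizedModule S lX, ⟨loc_eval_inj S lX h2.1, 
    loc_surj S lX (dl A S (dl A S lX)) (eval_sq S lX) h2.2⟩, fun i hi => ?_, fun i hi => ?_⟩
  · obtain ⟨j, rfl⟩ : ∃ j, i = j + 1 := ⟨i - 1, by omega⟩
    exact loc_ext_van S lX j (h3 _ hi)
  · obtain ⟨j, rfl⟩ : ∃ j, i = j + 1 := ⟨i - 1, by omega⟩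
    exact loc_ext_van S (dl A S lX) j (h4 _ hi)

end s2
section s3
variable {R : Type u} [CommRing R] (S : Submonoid R) [IsNoetherianRing R]

lemma gle_loc (n : ℕ) : ∀ {X X' : Type u} [AddCommGroup X] [Module R X]
  [AddCommGroup X'] [Module R X'] [Module (Localization S) X'] [IsScalarTower R (Localization S) X']
  (lX : X →ₗ[R] X') [IsLocalizedModule S lX], GDimLE R n (ModuleCat.of R X) →
    GDimLE (Localization S) n (ModuleCat.of (Localization S) X') := by
  induction n with
  | zero =>
    intro X X' _ _ _ _ _ _ lX _ h
    exact gz_loc S lX h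
  | succ n ih =>
    rintro X X' _ _ _ _ _ _ lX _ ⟨G, f, hG, hf, hK⟩
    have hf' : Function.Surjective (f : G →ₗ[R] X) := hf
    obtain ⟨fA, hfA⟩ := exists_map (Localization S) S (LocalizedModule.mkLinearMap S G) lX f
    refine ⟨ModuleCat.of (Localization S) (LocalizedModule S G), fA, gz_loc S (LocalizedModule.mkLinearMap S G) hG,
      loc_surj S (LocalizedModule.mkLinearMap S G) lX hfA hf, ?_⟩
    have h1 := ih (Submodule.toLocalized' (Localization S) S (LocalizedModule.mkLinearMap S G) (LinearMap.ker f)) hK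
    have h : (LinearMap.ker f).localized' (Localization S) S (LocalizedModule.mkLinearMap S G) = LinearMap.ker fA := by
      rw [LinearMap.localized'_ker_eq_ker_localizedMap (Localization S) S (LocalizedModule.mkLinearMap S G) lX f]
      ext y
      simp only [LinearMap.mem_ker]
      rw [sq_fun S (LocalizedModule.mkLinearMap S G) lX hfA]
      rfl
    rw [h] at h1
    exact h1

lemma loc_Et {X : Type u} [AddCommGroup X] [Module R X] [Module.Finite R X] (s : ℕ) :
    Nonempty (Et (Localization S) (LocalizedModule S X) s ≃ₗ[Localization S] LocalizedModule S (Et R X s)) := by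
  have : Module.FinitePresentation R X := Module.finitePresentation_of_finite _ _
  have : Module.FinitePresentation R (Module.Dual R X) := Module.finitePresentation_of_finite _ _
  let lX := LocalizedModule.mkLinearMap S X
  rcases s with _ | s
  · change Nonempty ((Module.Dual (Localization S) (Module.Dual (Localization S) (LocalizedModule S X)) ⧸
      LinearMap.range (Module.Dual.eval (Localization S) (LocalizedModule S X))) ≃ₗ[Localization S]
      LocalizedModule S (Module.Dual R (Module.Dual R X) ⧸ LinearMap.range (Module.Dual.eval R X)))
    exact loc_coker S lX (dl (Localization S) S (dl (Localization S) S lX)) (eval_sq S lX) (LocalizedModule.mkLinearMap S _)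
  · change Nonempty (EX (Localization S) (Module.Dual (Localization S) (LocalizedModule S X)) (Localization S) (s+1)
      ≃ₗ[Localization S] LocalizedModule S (EX R (Module.Dual R X) R (s+1)))
    exact loc_ext S s (dl (Localization S) S lX) (LocalizedModule.mkLinearMap S _)
end s3
end S6

end

noncomputable section
namespace S6
section s1
variable {R : Type u} [CommRing R] {M : Type u} [AddCommGroup M] [Module R M]

lemma lam (F : MinRes R M) (s : ℕ) : Nonempty (Et R M s ≃ₗ[R] EX R F.lambdaMod R (s+1)) := by
  have hp := F.projective 0
  have hf := F.finite 0
  have hex : Function.Exact (F.d 0) F.ε := LinearMap.exact_iff.2 F.exact0.symm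
  have hdx := dual_range_exact hex F.surj
  have hs : Function.Surjective (F.d 0).dualMap.rangeRestrict := LinearMap.surjective_rangeRestrict _
  rcases s with _ | s
  · obtain ⟨e⟩ := con_ext1 (K := LinearMap.range (F.d 0).dualMap) hdx (dual_inj F.surj) hs (ex_proj 0)
    have hr : LinearMap.range (Module.Dual.eval R M) = LinearMap.range F.ε.dualMap.dualMap := by
      have h1 : Module.Dual.eval R M ∘ₗ F.ε = F.ε.dualMap.dualMap ∘ₗ Module.Dual.eval R (F.P 0) := rfl
      rw [← LinearMap.range_comp_of_range_eq_top (Module.Dual.eval R M) (LinearMap.range_eq_top.2 F.surj), h1,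
        LinearMap.range_comp_of_range_eq_top]
      exact LinearMap.range_eq_top.2 (Module.bijective_dual_eval R (F.P 0)).2
    exact ⟨(Submodule.quotEquivOfEq _ _ hr).trans e⟩
  · exact con_shift (K := LinearMap.range (F.d 0).dualMap) (Y := R) hdx (dual_inj F.surj) hs (s+1) (ex_proj s) (ex_proj (s+1))

lemma torsionless_of {P : Type u} [AddCommGroup P] [Module R P] (j : M →ₗ[R] Module.Dual R P)
    (hj : Function.Injective j) : Function.Injective (Module.Dual.eval R M) := by
  rw [injective_iff_map_eq_zero]
  intro x hx
  apply (injective_iff_map_eq_zero j).1 hj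
  ext p
  exact LinearMap.congr_fun hx (Module.Dual.eval R P p ∘ₗ j)

lemma hl_torsionless (h : IsHorizontallyLinked R M) : Function.Injective (Module.Dual.eval R M) := by
  obtain ⟨F, G, ⟨e⟩⟩ := h
  exact torsionless_of ((LinearMap.range (G.d 0).dualMap).subtype ∘ₗ e.symm.toLinearMap)
    ((Submodule.subtype_injective _).comp e.symm.injective)

lemma sInf_eq {P : ℕ → Prop} {t : ℕ} (h : sInf {n : ℕ∞ | ∃ k : ℕ, n = k ∧ P k} = (t : ℕ∞)) :
    P t ∧ ∀ i < t, ¬ P i := by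
  have hne : {n : ℕ∞ | ∃ k : ℕ, n = k ∧ P k}.Nonempty := by
    by_contra hc
    rw [Set.not_nonempty_iff_eq_empty] at hc
    rw [hc, sInf_empty] at h
    exact ENat.natCast_ne_top t h.symm
  constructor
  · have := csInf_mem hne
    rw [h] at this
    obtain ⟨k, hk, hP⟩ := this
    rwa [Nat.cast_inj.1 hk]
  · intro i hi hP
    have : (t : ℕ∞) ≤ i := h ▸ sInf_le ⟨i, rfl, hP⟩
    have := Nat.cast_le.1 this
    omega

lemma le_sInf' {P : ℕ → Prop} {t : ℕ} (h : ∀ i < t, ¬ P i) :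
    (t : ℕ∞) ≤ sInf {n : ℕ∞ | ∃ k : ℕ, n = k ∧ P k} := by
  refine le_sInf ?_
  rintro _ ⟨k, rfl, hk⟩
  refine Nat.cast_le.2 ?_
  by_contra hc
  exact h k (by omega) hk

lemma sInf_le' {P : ℕ → Prop} {t : ℕ} (h : P t) :
    sInf {n : ℕ∞ | ∃ k : ℕ, n = k ∧ P k} ≤ (t : ℕ∞) := sInf_le ⟨t, rfl, h⟩

lemma main_local [IsNoetherianRing R] [IsLocalRing R] [Module.Finite R M]
    (hinj : Function.Injective (Module.Dual.eval R M)) {n : ℕ} (hn : GDimLE R n (ModuleCat.of R M))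
    (h0 : ¬ IsGDimZero R M) (s : ℕ)
    (hs : ∀ i < s, Subsingleton (Et R M i)) :
    (s + 1 : ℕ) ≤ edepth R (IsLocalRing.maximalIdeal R) M ∧
    (edepth R (IsLocalRing.maximalIdeal R) M = (s + 1 : ℕ) ↔
      IsAssociatedPrime (IsLocalRing.maximalIdeal R) (Et R M s)) := by
  obtain ⟨d, hd, hd'⟩ := exists_depth (R := R)
  obtain ⟨h1, h2⟩ := local_lemma hd (fun h => h0 (AB_half hd hd' n _ hn h)) hinj s hs
  have hle : ((s + 1 : ℕ) : ℕ∞) ≤ edepth R (IsLocalRing.maximalIdeal R) M :=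
    le_sInf' fun i hi => by
      rw [not_not, extM_sub]
      exact h1 i hi
  refine ⟨hle, ?_⟩
  rw [← not_iff_not, ← ass_iff, ← h2]
  constructor
  · intro h
    by_contra hc
    refine h (le_antisymm (sInf_le' ?_) hle)
    rwa [extM_sub]
  · intro h h3
    have := (sInf_eq h3).1
    rw [extM_sub] at this
    exact this h

lemma gdim_zero (h : IsGDimZero R M) : GDim R M = 0 := by
  have : GDim R M ≤ (0 : ℕ) := sInf_le' h
  simpa using this

lemma gdim_fin (h : GDim R M < ⊤) : ∃ n, GDimLE R n (ModuleCat.of R M) := by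
  obtain ⟨t, ht⟩ := ENat.ne_top_iff_exists.1 h.ne
  exact ⟨t, (sInf_eq ht.symm).1⟩

lemma gdim_eq_zero (h : GDim R M = 0) : IsGDimZero R M :=
  (sInf_eq (t := 0) (by exact_mod_cast h)).1
end s1
end S6

end

section Statements

variable (R : Type u) [CommRing R] [IsNoetherianRing R]

theorem stmt6 [IsLocalRing R] (M : Type u) [AddCommGroup M] [Module R M] [Module.Finite R M]
    (F : MinRes R M) (h0 : 0 < GDim R M) (hfin : GDim R M < ⊤)
    (hHL : IsHorizontallyLinked R M) (t : ℕ) (ht : rgr R F.lambdaMod = (t : ℕ∞)) :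
    List.TFAE [edepth R (IsLocalRing.maximalIdeal R) M = (t : ℕ∞),
      IsAssociatedPrime (IsLocalRing.maximalIdeal R) (extM R t F.lambdaMod R),
      ∀ (p : Ideal R) (h : p.IsPrime), haveI := h; locGDim R p M ≠ 0 →
        edepth R (IsLocalRing.maximalIdeal R) M ≤ locDepth R p M] := by
  obtain ⟨⟨htpos, htne⟩, htlt⟩ := S6.sInf_eq ht
  obtain ⟨s, rfl⟩ : ∃ s, t = s + 1 := ⟨t - 1, by omega⟩
  have hs : ∀ i < s, Subsingleton (S6.Et R M i) := by
    intro i hi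
    obtain ⟨e⟩ := S6.lam F i
    rw [e.toEquiv.subsingleton_congr, ← S6.extM_sub]
    by_contra hc
    exact htlt (i+1) (by omega) ⟨by omega, hc⟩
  obtain ⟨e1⟩ := S6.lam F s
  obtain ⟨e2⟩ := S6.extM_equiv (R := R) (s+1) F.lambdaMod R
  have hsne : ¬ Subsingleton (S6.Et R M s) := by
    rwa [e1.toEquiv.subsingleton_congr, ← S6.extM_sub]
  have hinj := S6.hl_torsionless hHL
  obtain ⟨n, hn⟩ := S6.gdim_fin hfin
  have hgz : ¬ IsGDimZero R M := fun h => h0.ne' (S6.gdim_zero h)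
  obtain ⟨hle, hiff⟩ := S6.main_local hinj hn hgz s hs
  -- the localized statement
  have key : ∀ (p : Ideal R) (hp : p.IsPrime), ¬ IsGDimZero (Localization.AtPrime p) (LocalizedModule p.primeCompl M) →
      ((s + 1 : ℕ) ≤ locDepth R p M ∧ (locDepth R p M = (s + 1 : ℕ) ↔
      IsAssociatedPrime (IsLocalRing.maximalIdeal (Localization.AtPrime p))
        (S6.Et (Localization.AtPrime p) (LocalizedModule p.primeCompl M) s))) := by
    intro p hp hz
    have hfin : Module.Finite (Localization.AtPrime p) (LocalizedModule p.primeCompl M) :=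
      Module.Finite.of_isLocalizedModule p.primeCompl (LocalizedModule.mkLinearMap p.primeCompl M)
    have hno : IsNoetherianRing (Localization.AtPrime p) :=
      IsLocalization.isNoetherianRing p.primeCompl _ inferInstance
    refine S6.main_local (S6.loc_eval_inj p.primeCompl (LocalizedModule.mkLinearMap p.primeCompl M) hinj)
      (S6.gle_loc p.primeCompl n (LocalizedModule.mkLinearMap p.primeCompl M) hn) hz s ?_
    intro i hi
    obtain ⟨e⟩ := S6.loc_Et p.primeCompl (X := M) i
    have := hs i hi
    have : Subsingleton (LocalizedModule p.primeCompl (S6.Et R M i)) :=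
      IsLocalizedModule.subsingleton_of_subsingleton p.primeCompl (LocalizedModule.mkLinearMap p.primeCompl _)
    exact e.toEquiv.subsingleton
  tfae_have 1 ↔ 2 := by
    rw [hiff]
    exact LinearEquiv.isAssociatedPrime_iff (e1.trans e2.symm)
  tfae_have 1 → 3 := by
    intro h p hp hg
    rw [h]
    exact (key p hp fun hz => hg (S6.gdim_zero hz)).1
  tfae_have 3 → 1 := by
    intro h
    refine le_antisymm ?_ hle
    rw [not_subsingleton_iff_nontrivial] at hsne
    obtain ⟨p, hp⟩ := associatedPrimes.nonempty R (S6.Et R M s)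
    have hpp : p.IsPrime := hp.isPrime
    have hno : IsNoetherianRing (Localization.AtPrime p) :=
      IsLocalization.isNoetherianRing p.primeCompl _ inferInstance
    have hass := Module.associatedPrimes.mem_associatedPrimes_atPrime_of_mem_associatedPrimes hp
    obtain ⟨e⟩ := S6.loc_Et p.primeCompl (X := M) s
    have hass2 : IsAssociatedPrime (IsLocalRing.maximalIdeal (Localization.AtPrime p))
        (S6.Et (Localization.AtPrime p) (LocalizedModule p.primeCompl M) s) :=
      (LinearEquiv.isAssociatedPrime_iff e).2 hass
    have hz : ¬ IsGDimZero (Localization.AtPrime p) (LocalizedModule p.primeCompl M) := by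
      intro hz
      have := S6.Et_gz hz s
      exact not_isAssociatedPrime_of_subsingleton hass2
    have h3 := ((key p hpp hz).2.2 hass2)
    exact (h p hpp fun hc => hz (S6.gdim_eq_zero hc)).trans h3.le
  tfae_finish

end Statements
end

section
/- Let M and N be R-modules and let n be a positive integer with rgr(M) ≥ n. Then: (i) Tor^R_i(T_nM, N) ≅ Ext^{n−i}_R(M,N) for 1 ≤ i < n, and Tor^R_i(T_nM, N) ≅ Tor^R_{i−n}(λM, N) for i > n; (ii) Ext^i_R(T_nM, N) ≅ Tor^R_{n−i}(M,N) for 1 ≤ i < n, and Ext^i_R(T_nM, N) ≅ Ext^{i−n}_R(λM, N) for i > n. -/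
open CategoryTheory

noncomputable section
abbrev HH {R A B C : Type*} [CommRing R] [AddCommGroup A] [Module R A] [AddCommGroup B] [Module R B]
    [AddCommGroup C] [Module R C] (f : A →ₗ[R] B) (g : B →ₗ[R] C) : Type _ :=
  LinearMap.ker g ⧸ (LinearMap.range f).comap (LinearMap.ker g).subtype

section HHl
variable {R : Type*} [CommRing R] {A B C A' B' C' : Type*}
  [AddCommGroup A] [Module R A] [AddCommGroup B] [Module R B] [AddCommGroup C] [Module R C]
  [AddCommGroup A'] [Module R A'] [AddCommGroup B'] [Module R B'] [AddCommGroup C'] [Module R C']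

lemma HH_congr (f : A →ₗ[R] B) (g : B →ₗ[R] C) (f' : A' →ₗ[R] B') (g' : B' →ₗ[R] C')
    (eA : A ≃ₗ[R] A') (eB : B ≃ₗ[R] B') (eC : C ≃ₗ[R] C')
    (hf : ∀ x, f' (eA x) = eB (f x)) (hg : ∀ x, g' (eB x) = eC (g x)) :
    Nonempty (HH f g ≃ₗ[R] HH f' g') := by
  have hk : (LinearMap.ker g).map (eB : B →ₗ[R] B') = LinearMap.ker g' := by
    ext y
    obtain ⟨x, rfl⟩ := eB.surjective y
    simp [hg]
  refine ⟨Submodule.Quotient.equiv _ _ (eB.ofSubmodules _ _ hk) ?_⟩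
  ext ⟨y, hy⟩
  obtain ⟨x, rfl⟩ := eB.surjective y
  have hx : g x = 0 := by simpa [hg] using hy
  simp only [Submodule.mem_map, Submodule.mem_comap]
  constructor
  · rintro ⟨⟨z, hz⟩, ⟨a, ha⟩, h⟩
    refine ⟨eA a, ?_⟩
    have h2 : eB z = eB x := congrArg Subtype.val h
    have h3 : f a = z := ha
    rw [hf, h3, h2]; rfl
  · rintro ⟨a', ha⟩
    obtain ⟨a, rfl⟩ := eA.surjective a'
    have h3 : f a = x := eB.injective (by rw [← hf]; exact ha)
    exact ⟨⟨x, hx⟩, ⟨a, h3⟩, rfl⟩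

lemma HH_cover {L : Type*} [AddCommGroup L] [Module R L] (f : A →ₗ[R] B) (p : B →ₗ[R] L)
    (j : L →ₗ[R] C) (hp : Function.Surjective p) (hfp : LinearMap.range f = LinearMap.ker p) :
    Nonempty (HH f (j ∘ₗ p) ≃ₗ[R] LinearMap.ker j) := by
  let q : LinearMap.ker (j ∘ₗ p) →ₗ[R] LinearMap.ker j :=
    p.restrict (fun x hx => by simpa using hx)
  have hq : Function.Surjective q := by
    rintro ⟨y, hy⟩
    obtain ⟨x, rfl⟩ := hp y
    exact ⟨⟨x, by simpa using hy⟩, rfl⟩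
  have hk : (LinearMap.range f).comap (LinearMap.ker (j ∘ₗ p)).subtype = LinearMap.ker q := by
    rw [hfp]
    ext ⟨x, hx⟩
    simp [q, Subtype.ext_iff]
  exact ⟨(Submodule.quotEquivOfEq _ _ hk).trans (q.quotKerEquivOfSurjective hq)⟩

lemma HH_subsingleton (f : A →ₗ[R] B) (g : B →ₗ[R] C) (h : Subsingleton (HH f g))
    (hgf : ∀ x, g (f x) = 0) : LinearMap.range f = LinearMap.ker g := by
  have := Submodule.Quotient.subsingleton_iff.1 h
  apply le_antisymm
  · rintro _ ⟨x, rfl⟩; exact hgf x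
  · intro x hx
    have : (⟨x, hx⟩ : LinearMap.ker g) ∈
      (LinearMap.range f).comap (LinearMap.ker g).subtype := by rw [this]; trivial
    exact this
end HHl

variable {R : Type u} [CommRing R]

lemma homology_HH {c : ComplexShape ℕ} (K : HomologicalComplex (ModuleCat.{u} R) c) (i j k : ℕ)
    (hi : c.prev j = i) (hk : c.next j = k) :
    Nonempty (K.homology j ≃ₗ[R] HH (K.d i j).hom (K.d j k).hom) := by
  let S := K.sc' i j k
  have e1 : K.homology j ≅ S.homology := ShortComplex.homologyMapIso (K.isoSc' i j k hi hk)
  have e2 := S.moduleCatHomologyIso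
  refine ⟨(e1 ≪≫ e2).toLinearEquiv.trans (Submodule.quotEquivOfEq _ _ ?_)⟩
  ext ⟨x, hx⟩
  simp only [LinearMap.mem_range]
  constructor
  · rintro ⟨y, hy⟩
    exact ⟨y, congrArg Subtype.val hy⟩
  · rintro ⟨y, hy⟩
    exact ⟨y, Subtype.ext hy⟩

structure PRes (R : Type u) [CommRing R] (M : Type u) [AddCommGroup M] [Module R M] where
  P : ℕ → ModuleCat.{u} R
  projective : ∀ i, Module.Projective R (P i)
  d : (i : ℕ) → (↥(P (i + 1)) →ₗ[R] ↥(P i))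
  ε : ↥(P 0) →ₗ[R] M
  surj : Function.Surjective ε
  exact0 : LinearMap.range (d 0) = LinearMap.ker ε
  exact : ∀ i, LinearMap.range (d (i + 1)) = LinearMap.ker (d i)

namespace PRes
variable {M : Type u} [AddCommGroup M] [Module R M]

lemma d_d (F : PRes R M) (i : ℕ) (x) : F.d i (F.d (i+1) x) = 0 := by
  have : F.d (i+1) x ∈ LinearMap.ker (F.d i) := by rw [← F.exact]; exact ⟨x, rfl⟩
  exact this

lemma ε_d (F : PRes R M) (x) : F.ε (F.d 0 x) = 0 := by
  have : F.d 0 x ∈ LinearMap.ker (F.ε) := by rw [← F.exact0]; exact ⟨x, rfl⟩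
  exact this

def cx (F : PRes R M) : ChainComplex (ModuleCat.{u} R) ℕ :=
  ChainComplex.of F.P (fun i => ModuleCat.ofHom (F.d i)) (fun i => by
    ext x; exact F.d_d i x)

lemma cx_d (F : PRes R M) (i : ℕ) : F.cx.d (i+1) i = ModuleCat.ofHom (F.d i) :=
  ChainComplex.of_d F.P (fun i => ModuleCat.ofHom (F.d i)) i

lemma cx_exactAt (F : PRes R M) (i : ℕ) : F.cx.ExactAt (i+1) := by
  rw [HomologicalComplex.exactAt_iff' _ (i + 1 + 1) (i + 1) i (by simp) (by simp),
    ShortComplex.moduleCat_exact_iff_range_eq_ker]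
  have h1 : (F.cx.sc' (i+1+1) (i+1) i).f = ModuleCat.ofHom (F.d (i+1)) := F.cx_d (i+1)
  have h2 : (F.cx.sc' (i+1+1) (i+1) i).g = ModuleCat.ofHom (F.d i) := F.cx_d i
  rw [h1, h2]
  exact F.exact i

def cxπ (F : PRes R M) : F.cx ⟶ (ChainComplex.single₀ (ModuleCat.{u} R)).obj (ModuleCat.of R M) :=
  (ChainComplex.toSingle₀Equiv _ _).symm ⟨ModuleCat.ofHom F.ε, by
    rw [cx_d]; ext x; exact F.ε_d x⟩

lemma cxπ_quasi (F : PRes R M) : QuasiIso F.cxπ := ⟨fun n => by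
    cases n with
    | zero => 
      rw [ChainComplex.quasiIsoAt₀_iff, ShortComplex.quasiIso_iff_of_zeros']
      · refine (ShortComplex.exact_and_epi_g_iff_of_iso (S₂ := ShortComplex.mk (ModuleCat.ofHom (F.d 0))
          (ModuleCat.ofHom F.ε) (by ext x; exact F.ε_d x)) ?_).2 ⟨?_, ?_⟩
        · refine ShortComplex.isoMk (Iso.refl _) (Iso.refl _) (Iso.refl _) ?_ ?_
          · exact (Category.id_comp _).trans ((F.cx_d 0).symm.trans (Category.comp_id _).symm)
          · refine (Category.id_comp _).trans (Eq.trans ?_ (Category.comp_id _).symm)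
            exact (ChainComplex.toSingle₀Equiv_symm_apply_f_zero (C := F.cx) (X := ModuleCat.of R M) (ModuleCat.ofHom F.ε) _).symm
        · rw [ShortComplex.moduleCat_exact_iff_range_eq_ker]
          exact F.exact0
        · rw [ModuleCat.epi_iff_surjective]
          exact F.surj
      all_goals rfl
    | succ n =>
      rw [quasiIsoAt_iff_exactAt']
      · exact F.cx_exactAt n
      · exact HomologicalComplex.exactAt_single_obj _ _ _ _ (by simp)⟩

def toProj (F : PRes R M) : ProjectiveResolution (ModuleCat.of R M) where
  complex := F.cx
  projective n := by
    have := F.projective n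
    exact (IsProjective.iff_projective (F.P n)).1 this
  π := F.cxπ
  quasiIso := F.cxπ_quasi

end PRes

namespace PRes
variable {M : Type u} [AddCommGroup M] [Module R M]

lemma ext_HH (F : PRes R M) (N : Type u) [AddCommGroup N] [Module R N] (i : ℕ) :
    Nonempty (extM R (i + 1) M N ≃ₗ[R]
      HH (LinearMap.lcomp R N (F.d i)) (LinearMap.lcomp R N (F.d (i + 1)))) := by
  have e1 := (F.toProj.isoExt (R := R) (i+1) (ModuleCat.of R N)).toLinearEquiv
  obtain ⟨e2⟩ := homology_HH (F.toProj.complex.linearYonedaObj R (ModuleCat.of R N)) i (i+1) (i+2)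
    (by simp) (by simp)
  have h : Nonempty _ := HH_congr (((F.toProj.complex.linearYonedaObj R (ModuleCat.of R N)).d i (i+1)).hom)
    (((F.toProj.complex.linearYonedaObj R (ModuleCat.of R N)).d (i+1) (i+2)).hom)
    (LinearMap.lcomp R N (F.d i)) (LinearMap.lcomp R N (F.d (i + 1)))
    (ModuleCat.homLinearEquiv (S := R) (M := F.P i) (N := ModuleCat.of R N))
    (ModuleCat.homLinearEquiv (S := R) (M := F.P (i+1)) (N := ModuleCat.of R N))
    (ModuleCat.homLinearEquiv (S := R) (M := F.P (i+2)) (N := ModuleCat.of R N)) 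
    (fun x => by
      change _ = ModuleCat.Hom.hom (F.cx.d (i+1) i ≫ x)
      rw [cx_d]; rfl) 
    (fun x => by
      change _ = ModuleCat.Hom.hom (F.cx.d (i+2) (i+1) ≫ x)
      rw [cx_d]; rfl) 
  exact ⟨e1.trans (e2.trans h.some)⟩

open MonoidalCategory in
lemma tor_HH (F : PRes R M) (X : Type u) [AddCommGroup X] [Module R X] (i : ℕ) :
    Nonempty (torM R (i + 1) X M ≃ₗ[R]
      HH ((F.d (i + 1)).lTensor X) ((F.d i).lTensor X)) := by
  let G := (tensoringLeft (ModuleCat.{u} R)).obj (ModuleCat.of R X)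
  have e1 : torM R (i + 1) X M ≃ₗ[R] _ := (F.toProj.isoLeftDerivedObj G (i+1)).toLinearEquiv
  obtain ⟨e2⟩ := homology_HH ((G.mapHomologicalComplex _).obj F.toProj.complex) (i+2) (i+1) i
    (by simp) (by simp)
  refine ⟨e1.trans (e2.trans (HH_congr _ _ ((F.d (i + 1)).lTensor X) ((F.d i).lTensor X)
    (LinearEquiv.refl R _) (LinearEquiv.refl R _) (LinearEquiv.refl R _) ?_ ?_).some)⟩
  · intro x
    change _ = (ModuleCat.Hom.hom (ModuleCat.of R X ◁ F.cx.d (i+2) (i+1))) x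
    rw [cx_d]; rfl
  · intro x
    change _ = (ModuleCat.Hom.hom (ModuleCat.of R X ◁ F.cx.d (i+1) i)) x
    rw [cx_d]; rfl

/-- splice -/
def cons {K P C : Type u} [AddCommGroup K] [Module R K] [AddCommGroup P] [Module R P]
    [AddCommGroup C] [Module R C] (F : PRes R K) (hP : Module.Projective R P)
    (j : K →ₗ[R] P) (f : P →ₗ[R] C)
    (hj : Function.Injective j) (hf : Function.Surjective f)
    (hjf : LinearMap.range j = LinearMap.ker f) : PRes R C where
  P i := match i with
    | 0 => ModuleCat.of R P
    | i + 1 => F.P i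
  projective i := match i with
    | 0 => hP
    | i + 1 => F.projective i
  d i := match i with
    | 0 => j ∘ₗ F.ε
    | i + 1 => F.d i
  ε := f
  surj := hf
  exact0 := by
    change LinearMap.range (j ∘ₗ F.ε) = _
    rw [LinearMap.range_comp_of_range_eq_top _ (LinearMap.range_eq_top.2 F.surj), hjf]
  exact i := match i with
    | 0 => by
      change LinearMap.range (F.d 0) = LinearMap.ker (j ∘ₗ F.ε)
      rw [LinearMap.ker_comp_of_ker_eq_bot _ (LinearMap.ker_eq_bot.2 hj)]
      exact F.exact0
    | i + 1 => F.exact i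

/-- syzygies of the standard free resolution -/
def stdK (C : ModuleCat.{u} R) : ℕ → ModuleCat.{u} R
  | 0 => C
  | i + 1 => ModuleCat.of R (LinearMap.ker (Finsupp.linearCombination R (id : stdK C i → stdK C i)))

lemma exists_res (C : Type u) [AddCommGroup C] [Module R C] : Nonempty (PRes R C) := by
  let K := stdK (ModuleCat.of R C)
  let p (i : ℕ) : (K i →₀ R) →ₗ[R] K i := Finsupp.linearCombination R id
  have hp (i : ℕ) : Function.Surjective (p i) := Finsupp.linearCombination_id_surjective R (K i)
  let s (i : ℕ) : K (i+1) →ₗ[R] (K i →₀ R) := (LinearMap.ker (p i)).subtype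
  have hs (i : ℕ) : Function.Injective (s i) := Subtype.val_injective
  have hsr (i : ℕ) : LinearMap.range (s i) = LinearMap.ker (p i) := Submodule.range_subtype _
  exact ⟨{
    P := fun i => ModuleCat.of R (K i →₀ R)
    projective := fun i => (inferInstance : Module.Projective R (K i →₀ R))
    d := fun i => s i ∘ₗ p (i+1)
    ε := p 0
    surj := hp 0
    exact0 := by
      rw [LinearMap.range_comp_of_range_eq_top _ (LinearMap.range_eq_top.2 (hp 1))]
      exact hsr 0
    exact := fun i => by
      rw [LinearMap.range_comp_of_range_eq_top _ (LinearMap.range_eq_top.2 (hp _)), hsr,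
        LinearMap.ker_comp_of_ker_eq_bot _ (LinearMap.ker_eq_bot.2 (hs i))] }⟩

end PRes

section shift
variable {K P C : Type u} [AddCommGroup K] [Module R K] [AddCommGroup P] [Module R P]
    [AddCommGroup C] [Module R C]

lemma ext_shift [hP : Module.Projective R P] (j : K →ₗ[R] P) (f : P →ₗ[R] C)
    (hj : Function.Injective j) (hf : Function.Surjective f)
    (hjf : LinearMap.range j = LinearMap.ker f) (N : Type u) [AddCommGroup N] [Module R N] (i : ℕ) :
    Nonempty (extM R (i + 2) C N ≃ₗ[R] extM R (i + 1) K N) := by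
  obtain ⟨F⟩ := PRes.exists_res (R := R) K
  obtain ⟨e1⟩ := (F.cons hP j f hj hf hjf).ext_HH N (i+1)
  obtain ⟨e2⟩ := F.ext_HH N i
  exact ⟨e1.trans e2.symm⟩

lemma ext_one {P₀ P₁ P₂ : Type u} [AddCommGroup P₀] [Module R P₀] [AddCommGroup P₁] [Module R P₁]
    [AddCommGroup P₂] [Module R P₂] [h0 : Module.Projective R P₀] [h1 : Module.Projective R P₁]
    [h2 : Module.Projective R P₂] (d₁ : P₂ →ₗ[R] P₁) (d₀ : P₁ →ₗ[R] P₀) (f : P₀ →ₗ[R] C)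
    (hf : Function.Surjective f) (e0 : LinearMap.range d₀ = LinearMap.ker f)
    (e1 : LinearMap.range d₁ = LinearMap.ker d₀)
    (N : Type u) [AddCommGroup N] [Module R N] :
    Nonempty (extM R 1 C N ≃ₗ[R] HH (LinearMap.lcomp R N d₀) (LinearMap.lcomp R N d₁)) := by
  obtain ⟨F⟩ := PRes.exists_res (R := R) (LinearMap.ker d₁)
  let F1 : PRes R (LinearMap.range d₁) :=
    F.cons h2 (LinearMap.ker d₁).subtype d₁.rangeRestrict Subtype.val_injective
      d₁.surjective_rangeRestrict (by simp)
  let F2 : PRes R (LinearMap.range d₀) :=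
    F1.cons h1 (LinearMap.range d₁).subtype d₀.rangeRestrict Subtype.val_injective
      d₀.surjective_rangeRestrict (by simp [e1])
  let F3 : PRes R C := F2.cons h0 (LinearMap.range d₀).subtype f Subtype.val_injective hf
    (by simp [e0])
  exact F3.ext_HH N 0

open TensorProduct in
lemma snake_tensor {L' Q L : Type u} [AddCommGroup L'] [Module R L'] [AddCommGroup Q] [Module R Q]
    [AddCommGroup L] [Module R L] [Module.Flat R P] [Module.Flat R Q]
    (j : K →ₗ[R] P) (f : P →ₗ[R] C) (s : L' →ₗ[R] Q) (p : Q →ₗ[R] L)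
    (hj : Function.Injective j) (hf : Function.Surjective f)
    (hjf : LinearMap.range j = LinearMap.ker f)
    (hs : Function.Injective s) (hp : Function.Surjective p)
    (hsp : LinearMap.range s = LinearMap.ker p) :
    Nonempty (LinearMap.ker (s.lTensor C) ≃ₗ[R] LinearMap.ker (j.rTensor L)) := by
  have ejf : Function.Exact j f := LinearMap.exact_iff.2 hjf.symm
  have esp : Function.Exact s p := LinearMap.exact_iff.2 hsp.symm
  have hf₁ : Function.Exact (j.rTensor L') (f.rTensor L') := rTensor_exact L' ejf hf
  have hg₁ : Function.Exact (j.rTensor Q) (f.rTensor Q) := rTensor_exact Q ejf hf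
  have c1 : (j.rTensor Q) ∘ₗ (s.lTensor K) = (s.lTensor P) ∘ₗ (j.rTensor L') := by
    ext; simp
  have c2 : (f.rTensor Q) ∘ₗ (s.lTensor P) = (s.lTensor C) ∘ₗ (f.rTensor L') := by
    ext; simp
  have k3 : Function.Exact (LinearMap.ker (s.lTensor C)).subtype (s.lTensor C) :=
    LinearMap.exact_subtype_ker_map _
  have k2 : Function.Exact (LinearMap.ker (s.lTensor P)).subtype (s.lTensor P) :=
    LinearMap.exact_subtype_ker_map _
  have q1 : Function.Exact (s.lTensor K) (p.lTensor K) := lTensor_exact K esp hp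
  have q2 : Function.Exact (s.lTensor P) (p.lTensor P) := lTensor_exact P esp hp
  have sf : Function.Surjective (f.rTensor L') := LinearMap.rTensor_surjective L' hf
  have ij : Function.Injective (j.rTensor Q) := Module.Flat.rTensor_preserves_injective_linearMap j hj
  have is : Function.Injective (s.lTensor P) := Module.Flat.lTensor_preserves_injective_linearMap s hs
  let δ := SnakeLemma.δ' (s.lTensor K) (s.lTensor P) (s.lTensor C) (j.rTensor L') (f.rTensor L') hf₁
    (j.rTensor Q) (f.rTensor Q) hg₁ c1 c2 _ k3 _ q1 sf ij
  have hl : Function.Exact δ (j.rTensor L) :=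
    SnakeLemma.exact_δ'_left _ _ _ _ _ _ _ _ _ _ _ _ _ _ _ (π₂ := p.lTensor P) (hπ₂ := q2)
      _ _ _ (by ext; simp) (LinearMap.lTensor_surjective K hp)
  have hr : Function.Exact (0 : LinearMap.ker (s.lTensor P) →ₗ[R] _) δ :=
    SnakeLemma.exact_δ'_right _ _ _ _ _ _ _ _ _ _ _ (ι₂ := (LinearMap.ker (s.lTensor P)).subtype)
     (hι₂ := k2) _ _ _ _ _ _ _ (by 
        ext ⟨x, hx⟩
        have : x = 0 := is (by simpa using hx)
        simp [this]) Subtype.val_injective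
  have hi : Function.Injective δ := by
    rw [← LinearMap.ker_eq_bot, LinearMap.exact_iff.1 hr, LinearMap.range_zero]
  exact ⟨(LinearEquiv.ofInjective δ hi).trans
    (LinearEquiv.ofEq _ _ (LinearMap.exact_iff.1 hl).symm)⟩

lemma tor_ker {N : Type u} [AddCommGroup N] [Module R N] (F : PRes R N) (X : Type u)
    [AddCommGroup X] [Module R X] (i : ℕ) :
    Nonempty (torM R (i + 1) X N ≃ₗ[R]
      LinearMap.ker ((LinearMap.range (F.d i)).subtype.lTensor X)) := by
  obtain ⟨e1⟩ := F.tor_HH X i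
  obtain ⟨e2⟩ := HH_cover ((F.d (i+1)).lTensor X) ((F.d i).rangeRestrict.lTensor X)
    ((LinearMap.range (F.d i)).subtype.lTensor X)
    (LinearMap.lTensor_surjective X (F.d i).surjective_rangeRestrict) 
    ((LinearMap.exact_iff.1 (lTensor_exact X (LinearMap.exact_iff.2 (by
      rw [LinearMap.ker_rangeRestrict, F.exact])) (F.d i).surjective_rangeRestrict)).symm)
  rw [← LinearMap.lTensor_comp] at e2
  exact ⟨e1.trans e2⟩

lemma tor_shift [hP : Module.Projective R P] (j : K →ₗ[R] P) (f : P →ₗ[R] C)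
    (hj : Function.Injective j) (hf : Function.Surjective f)
    (hjf : LinearMap.range j = LinearMap.ker f) (N : Type u) [AddCommGroup N] [Module R N] (i : ℕ) :
    Nonempty (torM R (i + 2) C N ≃ₗ[R] torM R (i + 1) K N) := by
  obtain ⟨F⟩ := PRes.exists_res (R := R) N
  have := F.projective
  obtain ⟨e1⟩ := tor_ker F C (i+1)
  obtain ⟨e2⟩ := snake_tensor j f (LinearMap.range (F.d (i+1))).subtype (F.d i).rangeRestrict hj hf
    hjf Subtype.val_injective (F.d i).surjective_rangeRestrict 
    (by rw [LinearMap.ker_rangeRestrict, Submodule.range_subtype, F.exact])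
  obtain ⟨e3⟩ := tor_ker F K i
  refine ⟨e1.trans (e2.trans ((LinearEquiv.ofEq _ _ ?_).trans e3.symm))⟩
  have i1 : Function.Injective (j.rTensor (F.P i)) :=
    Module.Flat.rTensor_preserves_injective_linearMap j hj
  have i2 : Function.Injective ((LinearMap.range (F.d i)).subtype.lTensor P) :=
    Module.Flat.lTensor_preserves_injective_linearMap _ Subtype.val_injective
  rw [← LinearMap.ker_comp_of_ker_eq_bot _ (LinearMap.ker_eq_bot.2 i1),
    ← LinearMap.ker_comp_of_ker_eq_bot (j.rTensor _) (LinearMap.ker_eq_bot.2 i2)]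
  congr 1
  ext; simp

lemma tor_one {P₀ P₁ P₂ : Type u} [AddCommGroup P₀] [Module R P₀] [AddCommGroup P₁] [Module R P₁]
    [AddCommGroup P₂] [Module R P₂] [h0 : Module.Projective R P₀] 
    (d₁ : P₂ →ₗ[R] P₁) (d₀ : P₁ →ₗ[R] P₀) (f : P₀ →ₗ[R] C)
    (hf : Function.Surjective f) (e0 : LinearMap.range d₀ = LinearMap.ker f)
    (e1 : LinearMap.range d₁ = LinearMap.ker d₀)
    (N : Type u) [AddCommGroup N] [Module R N] :
    Nonempty (torM R 1 C N ≃ₗ[R] HH (d₁.rTensor N) (d₀.rTensor N)) := by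
  obtain ⟨F⟩ := PRes.exists_res (R := R) N
  have := F.projective
  obtain ⟨a1⟩ := tor_ker F C 0
  obtain ⟨a2⟩ := snake_tensor (LinearMap.range d₀).subtype f (LinearMap.range (F.d 0)).subtype F.ε
    Subtype.val_injective hf (by simp [e0]) Subtype.val_injective F.surj (by simp [F.exact0])
  obtain ⟨a3⟩ := HH_cover (d₁.rTensor N) (d₀.rangeRestrict.rTensor N)
    ((LinearMap.range d₀).subtype.rTensor N)
    (LinearMap.rTensor_surjective N d₀.surjective_rangeRestrict) 
    ((LinearMap.exact_iff.1 (rTensor_exact N (LinearMap.exact_iff.2 (by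
      rw [LinearMap.ker_rangeRestrict, e1])) d₀.surjective_rangeRestrict)).symm)
  rw [← LinearMap.rTensor_comp] at a3
  exact ⟨a1.trans (a2.trans a3.symm)⟩

lemma ext_congr (e : K ≃ₗ[R] C) (N : Type u) [AddCommGroup N] [Module R N] (i : ℕ) :
    Nonempty (extM R i K N ≃ₗ[R] extM R i C N) :=
  ⟨(((Ext R (ModuleCat.{u} R) i).mapIso (e.toModuleIso.symm.op)).app (ModuleCat.of R N)).toLinearEquiv⟩

lemma tor_congr (e : K ≃ₗ[R] C) (N : Type u) [AddCommGroup N] [Module R N] (i : ℕ) :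
    Nonempty (torM R i K N ≃ₗ[R] torM R i C N) :=
  ⟨(((Tor (ModuleCat.{u} R) i).mapIso e.toModuleIso).app (ModuleCat.of R N)).toLinearEquiv⟩

end shift

namespace PRes
variable {M : Type u} [AddCommGroup M] [Module R M]

def tail (F : PRes R M) : PRes R (LinearMap.ker F.ε) where
  P i := F.P (i + 1)
  projective i := F.projective (i + 1)
  d i := F.d (i + 1)
  ε := (F.d 0).codRestrict (LinearMap.ker F.ε) (fun x => LinearMap.mem_ker.2 (F.ε_d x))
  surj := by
    rintro ⟨x, hx⟩
    rw [← F.exact0] at hx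
    obtain ⟨y, rfl⟩ := hx
    exact ⟨y, rfl⟩
  exact0 := (F.exact 0).trans (LinearMap.ker_codRestrict _ _ _).symm
  exact i := F.exact (i + 1)

lemma tor_HH' (N : Type u) [AddCommGroup N] [Module R N] (k : ℕ) :
    ∀ {M : Type u} [AddCommGroup M] [Module R M] (F : PRes R M),
    Nonempty (torM R (k + 1) M N ≃ₗ[R] HH ((F.d (k + 1)).rTensor N) ((F.d k).rTensor N)) := by
  induction k with
  | zero =>
    intro M _ _ F
    have := F.projective 0
    exact tor_one (F.d 1) (F.d 0) F.ε F.surj F.exact0 (F.exact 0) N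
  | succ k ih =>
    intro M _ _ F
    have := F.projective 0
    obtain ⟨e1⟩ := tor_shift (LinearMap.ker F.ε).subtype F.ε Subtype.val_injective F.surj
      (by simp) N k
    obtain ⟨e2⟩ := ih F.tail
    exact ⟨e1.trans e2⟩

end PRes

namespace MinRes
variable {M : Type u} [AddCommGroup M] [Module R M]

def toPRes (F : MinRes R M) : PRes R M where
  P := F.P
  projective := F.projective
  d := F.d
  ε := F.ε
  surj := F.surj
  exact0 := F.exact0
  exact := F.exact

def mkT (F : MinRes R M) (k : ℕ) : Module.Dual R ↥(F.P (k + 1)) →ₗ[R] F.T k :=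
  (LinearMap.range (F.d k).dualMap).mkQ

lemma mkT_surj (F : MinRes R M) (k : ℕ) : Function.Surjective (F.mkT k) :=
  Submodule.mkQ_surjective _

lemma ker_mkT (F : MinRes R M) (k : ℕ) :
    LinearMap.range (F.d k).dualMap = LinearMap.ker (F.mkT k) :=
  (Submodule.ker_mkQ _).symm

lemma proj_dual (F : MinRes R M) (k : ℕ) : Module.Projective R (Module.Dual R ↥(F.P k)) := by
  have := F.projective k
  have := F.finite k
  infer_instance

def Ex (F : MinRes R M) (k : ℕ) : Prop :=
  LinearMap.range (F.d k).dualMap = LinearMap.ker (F.d (k + 1)).dualMap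

lemma ex_of_ext (F : MinRes R M) (k : ℕ) (h : Subsingleton (extM R (k + 1) M R)) : F.Ex k := by
  obtain ⟨e⟩ := F.toPRes.ext_HH R k
  refine HH_subsingleton (F.d k).dualMap (F.d (k + 1)).dualMap e.symm.toEquiv.subsingleton ?_
  intro x
  ext y
  change x (F.d k (F.d (k+1) y)) = 0
  rw [show F.d k (F.d (k+1) y) = 0 from F.toPRes.d_d k y, map_zero]

lemma exists_j (F : MinRes R M) (k : ℕ) (h : F.Ex k) :
    Nonempty (LinearMap.range (F.d (k+1)).dualMap ≃ₗ[R] F.T k) :=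
  ⟨(LinearMap.quotKerEquivRange _).symm.trans (Submodule.quotEquivOfEq _ _ h.symm)⟩

variable (N : Type u) [AddCommGroup N] [Module R N]

lemma torT0 (F : MinRes R M) (k i : ℕ) : Nonempty (torM R (i + 2) (F.T k) N ≃ₗ[R]
    torM R (i + 1) (LinearMap.range (F.d k).dualMap) N) := by
  have := F.proj_dual (k + 1)
  exact tor_shift (LinearMap.range (F.d k).dualMap).subtype (F.mkT k) Subtype.val_injective
    (F.mkT_surj k) (by rw [Submodule.range_subtype, ker_mkT]) N i

lemma extT0 (F : MinRes R M) (k i : ℕ) : Nonempty (extM R (i + 2) (F.T k) N ≃ₗ[R]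
    extM R (i + 1) (LinearMap.range (F.d k).dualMap) N) := by
  have := F.proj_dual (k + 1)
  exact ext_shift (LinearMap.range (F.d k).dualMap).subtype (F.mkT k) Subtype.val_injective
    (F.mkT_surj k) (by rw [Submodule.range_subtype, ker_mkT]) N i

lemma tor_iter (F : MinRes R M) (a b c : ℕ) (h : ∀ k < a + b, F.Ex k) :
    Nonempty (torM R (a + c + 1) (F.T (a + b)) N ≃ₗ[R] torM R (c + 1) (F.T b) N) := by
  induction a with
  | zero => rw [zero_add, zero_add]; exact ⟨LinearEquiv.refl _ _⟩
  | succ a ih =>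
    obtain ⟨e⟩ := ih (fun k hk => h k (by omega))
    rw [show a + 1 + c + 1 = (a + c) + 2 by omega, show a + 1 + b = (a + b) + 1 by omega]
    obtain ⟨e1⟩ := F.torT0 N (a + b + 1) (a + c)
    obtain ⟨e2⟩ := tor_congr (R := R) (K := ↥(LinearMap.range (F.d (a + b + 1)).dualMap)) (C := F.T (a + b))
      (F.exists_j (a + b) (h _ (by omega))).some N (a + c + 1)
    exact ⟨e1.trans (e2.trans e)⟩

lemma ext_iter (F : MinRes R M) (a b c : ℕ) (h : ∀ k < a + b, F.Ex k) :
    Nonempty (extM R (a + c + 1) (F.T (a + b)) N ≃ₗ[R] extM R (c + 1) (F.T b) N) := by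
  induction a with
  | zero => rw [zero_add, zero_add]; exact ⟨LinearEquiv.refl _ _⟩
  | succ a ih =>
    obtain ⟨e⟩ := ih (fun k hk => h k (by omega))
    rw [show a + 1 + c + 1 = (a + c) + 2 by omega, show a + 1 + b = (a + b) + 1 by omega]
    obtain ⟨e1⟩ := F.extT0 N (a + b + 1) (a + c)
    obtain ⟨e2⟩ := ext_congr (R := R) (K := ↥(LinearMap.range (F.d (a + b + 1)).dualMap)) (C := F.T (a + b))
      (F.exists_j (a + b) (h _ (by omega))).some N (a + c + 1)
    exact ⟨e1.trans (e2.trans e)⟩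

lemma tor_mid (F : MinRes R M) (b : ℕ) (h : F.Ex b) :
    Nonempty (torM R 1 (F.T (b + 1)) N ≃ₗ[R] extM R (b + 1) M N) := by
  have := F.projective
  have := F.finite
  have := F.proj_dual (b + 2)
  obtain ⟨e1⟩ := tor_one (F.d b).dualMap (F.d (b + 1)).dualMap (F.mkT (b + 1))
    (F.mkT_surj _) (F.ker_mkT _) h N
  obtain ⟨e2⟩ := F.toPRes.ext_HH N b
  obtain ⟨e3⟩ := HH_congr (R := R) (A := TensorProduct R (Module.Dual R (F.P b)) N)
    (B := TensorProduct R (Module.Dual R (F.P (b + 1))) N)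
    (C := TensorProduct R (Module.Dual R (F.P (b + 1 + 1))) N)
    (A' := F.P b →ₗ[R] N) (B' := F.P (b + 1) →ₗ[R] N) (C' := F.P (b + 1 + 1) →ₗ[R] N)
    ((F.d b).dualMap.rTensor N) ((F.d (b + 1)).dualMap.rTensor N)
    (LinearMap.lcomp R N (F.d b)) (LinearMap.lcomp R N (F.d (b + 1)))
    (dualTensorHomEquiv R (F.P b) N) (dualTensorHomEquiv R (F.P (b + 1)) N)
    (dualTensorHomEquiv R (F.P (b + 1 + 1)) N)
    (by intro x; exact (DFunLike.congr_fun (dualTensorHom_comp_rTensor_dualMap (P := N) (F.d b)) x).symm)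
    (by intro x; exact (DFunLike.congr_fun (dualTensorHom_comp_rTensor_dualMap (P := N) (F.d (b + 1))) x).symm)
  exact ⟨e1.trans (e3.trans e2.symm)⟩

open TensorProduct in
def bid (P : Type u) [AddCommGroup P] [Module R P] [Module.Projective R P] [Module.Finite R P] :
    P ⊗[R] N ≃ₗ[R] (Module.Dual R P →ₗ[R] N) :=
  (LinearEquiv.rTensor N (Module.evalEquiv R P)).trans (dualTensorHomEquiv R (Module.Dual R P) N)

open TensorProduct in
lemma bid_nat {P Q : Type u} [AddCommGroup P] [Module R P] [Module.Projective R P] [Module.Finite R P]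
    [AddCommGroup Q] [Module R Q] [Module.Projective R Q] [Module.Finite R Q] (f : P →ₗ[R] Q)
    (x : P ⊗[R] N) : LinearMap.lcomp R N f.dualMap (bid N P x) = bid N Q (f.rTensor N x) := by
  induction x with
  | zero => simp
  | add x y hx hy => simp only [map_add, hx, hy]
  | tmul p n =>
    ext φ
    simp [bid, dualTensorHomEquiv]

lemma ext_mid (F : MinRes R M) (b : ℕ) (h : F.Ex b) :
    Nonempty (extM R 1 (F.T (b + 1)) N ≃ₗ[R] torM R (b + 1) M N) := by
  have := F.projective
  have := F.finite
  have := F.proj_dual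
  obtain ⟨e1⟩ := ext_one (F.d b).dualMap (F.d (b + 1)).dualMap (F.mkT (b + 1))
    (F.mkT_surj _) (F.ker_mkT _) h N
  obtain ⟨e2⟩ := F.toPRes.tor_HH' N b
  obtain ⟨e3⟩ := HH_congr ((F.d (b + 1)).rTensor N) ((F.d b).rTensor N)
    (LinearMap.lcomp R N (F.d (b + 1)).dualMap) (LinearMap.lcomp R N (F.d b).dualMap)
    (bid N (F.P (b + 2))) (bid N (F.P (b + 1))) (bid N (F.P b))
    (bid_nat N _) (bid_nat N _)
  exact ⟨e1.trans (e3.symm.trans e2.symm)⟩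

end MinRes

end

section Statements

variable (R : Type u) [CommRing R] [IsNoetherianRing R]

theorem stmt7 (M N : Type u) [AddCommGroup M] [Module R M] [Module.Finite R M]
    [AddCommGroup N] [Module R N] [Module.Finite R N]
    (F : MinRes R M) (n : ℕ) (hn : 0 < n) (hrgr : (n : ℕ∞) ≤ rgr R M) :
    (∀ i : ℕ, 1 ≤ i → i < n →
      Nonempty (torM R i (F.T (n - 1)) N ≃ₗ[R] extM R (n - i) M N)) ∧
    (∀ i : ℕ, n < i →
      Nonempty (torM R i (F.T (n - 1)) N ≃ₗ[R] torM R (i - n) F.lambdaMod N)) ∧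
    (∀ i : ℕ, 1 ≤ i → i < n →
      Nonempty (extM R i (F.T (n - 1)) N ≃ₗ[R] torM R (n - i) M N)) ∧
    (∀ i : ℕ, n < i →
      Nonempty (extM R i (F.T (n - 1)) N ≃ₗ[R] extM R (i - n) F.lambdaMod N)) := by
  have hex : ∀ k, k < n - 1 → F.Ex k := by
    intro k hk
    apply F.ex_of_ext
    by_contra hc
    have h1 : rgr R M ≤ ((k + 1 : ℕ) : ℕ∞) := sInf_le ⟨k + 1, rfl, by omega, hc⟩
    have h2 : n ≤ k + 1 := by exact_mod_cast hrgr.trans h1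
    omega
  refine ⟨?_, ?_, ?_, ?_⟩
  · intro i h1 h2
    obtain ⟨a, rfl⟩ : ∃ a, i = a + 1 := ⟨i - 1, by omega⟩
    obtain ⟨b, rfl⟩ : ∃ b, n = a + b + 2 := ⟨n - a - 2, by omega⟩
    rw [show a + b + 2 - (a + 1) = b + 1 by omega]
    rw [show a + b + 2 - 1 = a + (b + 1) by omega] at hex ⊢
    obtain ⟨e1⟩ := F.tor_iter N a (b + 1) 0 hex
    obtain ⟨e2⟩ := F.tor_mid N b (hex b (by omega))
    exact ⟨e1.trans e2⟩
  · intro i h1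
    obtain ⟨m, rfl⟩ : ∃ m, n = m + 1 := ⟨n - 1, by omega⟩
    obtain ⟨c, rfl⟩ : ∃ c, i = m + (c + 1) + 1 := ⟨i - m - 2, by omega⟩
    rw [show m + (c + 1) + 1 - (m + 1) = c + 1 by omega]
    rw [show m + 1 - 1 = m + 0 by omega] at hex ⊢
    obtain ⟨e1⟩ := F.tor_iter N m 0 (c + 1) hex
    obtain ⟨e2⟩ := F.torT0 N 0 c
    exact ⟨e1.trans e2⟩
  · intro i h1 h2
    obtain ⟨a, rfl⟩ : ∃ a, i = a + 1 := ⟨i - 1, by omega⟩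
    obtain ⟨b, rfl⟩ : ∃ b, n = a + b + 2 := ⟨n - a - 2, by omega⟩
    rw [show a + b + 2 - (a + 1) = b + 1 by omega]
    rw [show a + b + 2 - 1 = a + (b + 1) by omega] at hex ⊢
    obtain ⟨e1⟩ := F.ext_iter N a (b + 1) 0 hex
    obtain ⟨e2⟩ := F.ext_mid N b (hex b (by omega))
    exact ⟨e1.trans e2⟩
  · intro i h1
    obtain ⟨m, rfl⟩ : ∃ m, n = m + 1 := ⟨n - 1, by omega⟩
    obtain ⟨c, rfl⟩ : ∃ c, i = m + (c + 1) + 1 := ⟨i - m - 2, by omega⟩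
    rw [show m + (c + 1) + 1 - (m + 1) = c + 1 by omega]
    rw [show m + 1 - 1 = m + 0 by omega] at hex ⊢
    obtain ⟨e1⟩ := F.ext_iter N m 0 (c + 1) hex
    obtain ⟨e2⟩ := F.extT0 N 0 c
    exact ⟨e1.trans e2⟩

end Statements
end

section
/- Let M and N be R-modules. (i) If M is horizontally linked, then Ext^i_R(M,M) ≅ Ext^i_R(λM, λM) for all i with 1 ≤ i < inf{rgr(M), rgr(λM)}; in particular, if Gdim_R(M) = 0 then Ext^i_R(M,M) ≅ Ext^i_R(λM, λM) for all i > 0. (ii) If M and N are horizontally self-linked (M ≅ λM and N ≅ λN), then Ext^i_R(M,N) ≅ Ext^i_R(N,M) for all i with 1 ≤ i < inf{rgr(M), rgr(N)}. -/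
open CategoryTheory

noncomputable section

set_option maxSynthPendingDepth 3


structure Res (R : Type u) [CommRing R] (M : Type u) [AddCommGroup M] [Module R M] where
  P : ℕ → ModuleCat.{u} R
  projective : ∀ i, Module.Projective R (P i)
  d : (i : ℕ) → (↥(P (i + 1)) →ₗ[R] ↥(P i))
  ε : ↥(P 0) →ₗ[R] M
  surj : Function.Surjective ε
  exact0 : LinearMap.range (d 0) = LinearMap.ker ε
  exact : ∀ i, LinearMap.range (d (i + 1)) = LinearMap.ker (d i)

def MinRes.toRes {R M : Type u} [CommRing R] [AddCommGroup M] [Module R M] (F : MinRes R M) :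
    Res R M := ⟨F.P, F.projective, F.d, F.ε, F.surj, F.exact0, F.exact⟩

theorem common_quot {R S X Y : Type u} [CommRing R] [AddCommGroup S] [Module R S]
    [AddCommGroup X] [Module R X] [AddCommGroup Y] [Module R Y]
    (f : S →ₗ[R] X) (g : S →ₗ[R] Y) (hf : Function.Surjective f) (hg : Function.Surjective g)
    (h : ∀ s, f s = 0 ↔ g s = 0) : Nonempty (X ≃ₗ[R] Y) := by
  have hk : LinearMap.ker f = LinearMap.ker g := by ext s; exact h s
  exact ⟨(f.quotKerEquivOfSurjective hf).symm.trans
    ((Submodule.quotEquivOfEq _ _ hk).trans (g.quotKerEquivOfSurjective hg))⟩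

namespace Res

variable {R M : Type u} [CommRing R] [AddCommGroup M] [Module R M]

theorem dd (F : Res R M) (i : ℕ) : F.d i ∘ₗ F.d (i+1) = 0 := by
  ext x
  have : F.d (i+1) x ∈ LinearMap.ker (F.d i) := by rw [← F.exact]; exact ⟨x, rfl⟩
  exact this

theorem d0 (F : Res R M) : F.ε ∘ₗ F.d 0 = 0 := by
  ext x
  have : F.d 0 x ∈ LinearMap.ker (F.ε) := by rw [← F.exact0]; exact ⟨x, rfl⟩
  exact this

def cpx (F : Res R M) : ChainComplex (ModuleCat.{u} R) ℕ :=
  ChainComplex.of F.P (fun i => ModuleCat.ofHom (F.d i))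
    (fun i => by rw [← ModuleCat.ofHom_comp, F.dd]; rfl)

theorem cpx_d (F : Res R M) (i : ℕ) : F.cpx.d (i+1) i = ModuleCat.ofHom (F.d i) := by
  simp only [cpx, ChainComplex.of_d]

def aug (F : Res R M) : F.cpx ⟶ (ChainComplex.single₀ (ModuleCat.{u} R)).obj (ModuleCat.of R M) :=
  (ChainComplex.toSingle₀Equiv _ _).symm ⟨ModuleCat.ofHom F.ε, by
    rw [F.cpx_d]
    erw [← ModuleCat.ofHom_comp]
    rw [F.d0]; rfl⟩

theorem aug_f (F : Res R M) : F.aug.f 0 = ModuleCat.ofHom F.ε :=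
  ChainComplex.toSingle₀Equiv_symm_apply_f_zero _ _

def pr (F : Res R M) : ProjectiveResolution (ModuleCat.of R M) where
  complex := F.cpx
  projective n := (IsProjective.iff_projective (F.P n)).1 (F.projective n)
  π := F.aug
  quasiIso := ⟨fun n => by
    cases n
    · rw [ChainComplex.quasiIsoAt₀_iff, ShortComplex.quasiIso_iff_of_zeros']
      · constructor
        · rw [ShortComplex.moduleCat_exact_iff_range_eq_ker]
          change LinearMap.range (F.cpx.d 1 0).hom = LinearMap.ker (F.aug.f 0).hom
          rw [F.aug_f]
          have h1 := F.cpx_d 0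
          erw [h1]
          exact F.exact0
        · change Epi (F.aug.f 0)
          rw [F.aug_f]
          exact (ModuleCat.epi_iff_surjective _).2 F.surj
      all_goals rfl
    · rename_i n
      rw [quasiIsoAt_iff_exactAt']
      · rw [HomologicalComplex.exactAt_iff' _ (n + 2) (n + 1) n (by simp) (by simp),
          ShortComplex.moduleCat_exact_iff_range_eq_ker]
        change LinearMap.range (F.cpx.d (n+1+1) (n+1)).hom = LinearMap.ker (F.cpx.d (n+1) n).hom
        rw [F.cpx_d, F.cpx_d]
        exact F.exact n
      · apply ChainComplex.exactAt_succ_single_obj⟩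

variable (N : Type u) [AddCommGroup N] [Module R N]

abbrev coc (F : Res R M) (n : ℕ) : Submodule R (F.P (n+1) →ₗ[R] N) :=
  LinearMap.ker (LinearMap.lcomp R N (F.d (n+1)))

abbrev cob (F : Res R M) (n : ℕ) : Submodule R (F.P (n+1) →ₗ[R] N) :=
  LinearMap.range (LinearMap.lcomp R N (F.d n))

abbrev HH (F : Res R M) (n : ℕ) : Type u :=
  (F.coc N n) ⧸ (F.cob N n).submoduleOf (F.coc N n)

theorem ext_iso (F : Res R M) (n : ℕ) : Nonempty (extM R (n+1) M N ≃ₗ[R] F.HH N n) := by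
  have e1 := (F.pr.isoExt (R := R) (n+1) (ModuleCat.of R N)).toLinearEquiv
  let K := F.pr.complex.linearYonedaObj R (ModuleCat.of R N)
  let S := K.sc' n (n+1) (n+2)
  have e2 := (ShortComplex.homologyMapIso
    (K.isoSc' n (n+1) (n+2) (by simp) (by simp))).toLinearEquiv
  have e3 := S.moduleCatHomologyIso.toLinearEquiv
  have e : extM R (n+1) M N ≃ₗ[R] _ := e1.trans (e2.trans e3)
  suffices h : Nonempty (F.HH N n ≃ₗ[R]
      (LinearMap.ker S.g.hom ⧸ LinearMap.range S.moduleCatToCycles)) by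
    obtain ⟨h⟩ := h
    exact ⟨e.trans h.symm⟩
  have hg : ∀ x : (F.P (n+1) →ₗ[R] N),
      S.g.hom (ModuleCat.ofHom x : F.P (n+1) ⟶ ModuleCat.of R N) =
        (ModuleCat.ofHom (x ∘ₗ F.d (n+1)) : F.P (n+2) ⟶ ModuleCat.of R N) := by
    intro x
    have := F.cpx_d (n+1)
    change F.cpx.d (n+1+1) (n+1) ≫ (ModuleCat.ofHom x : F.P (n+1) ⟶ ModuleCat.of R N) = _
    rw [this]
    rfl
  have hf : ∀ x : (F.P n →ₗ[R] N),
      S.f.hom (ModuleCat.ofHom x : F.P n ⟶ ModuleCat.of R N) =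
        (ModuleCat.ofHom (x ∘ₗ F.d n) : F.P (n+1) ⟶ ModuleCat.of R N) := by
    intro x
    have := F.cpx_d n
    change F.cpx.d (n+1) n ≫ (ModuleCat.ofHom x : F.P n ⟶ ModuleCat.of R N) = _
    rw [this]
    rfl
  let T : F.coc N n →ₗ[R] LinearMap.ker S.g.hom :=
    { toFun := fun x => ⟨(ModuleCat.ofHom x.1 : F.P (n+1) ⟶ ModuleCat.of R N), by
        refine (hg x.1).trans ?_
        have : x.1 ∘ₗ F.d (n+1) = 0 := x.2
        rw [this]; rfl⟩
      map_add' := fun x y => rfl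
      map_smul' := fun r x => rfl }
  refine common_quot (Submodule.mkQ _) ((Submodule.mkQ _) ∘ₗ T) (Submodule.mkQ_surjective _)
    ((Submodule.mkQ_surjective _).comp ?_) ?_
  · rintro ⟨y, hy⟩
    let x : F.P (n+1) →ₗ[R] N := ModuleCat.Hom.hom (show F.P (n+1) ⟶ ModuleCat.of R N from y)
    refine ⟨⟨x, ?_⟩, rfl⟩
    have h1 := hg x
    have h2 : (ModuleCat.ofHom (x ∘ₗ F.d (n+1)) : F.P (n+2) ⟶ ModuleCat.of R N) = 0 :=
      h1.symm.trans hy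
    exact congrArg ModuleCat.Hom.hom h2
  · intro s
    simp only [LinearMap.comp_apply, Submodule.mkQ_apply, Submodule.Quotient.mk_eq_zero]
    change s.1 ∈ F.cob N n ↔ _
    constructor
    · rintro ⟨c, hc⟩
      refine ⟨(ModuleCat.ofHom c : F.P n ⟶ ModuleCat.of R N), Subtype.ext ?_⟩
      refine (hf c).trans ?_
      have : c ∘ₗ F.d n = s.1 := hc
      rw [this]; rfl
    · rintro ⟨c, hc⟩
      let c' : F.P n →ₗ[R] N := ModuleCat.Hom.hom (show F.P n ⟶ ModuleCat.of R N from c)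
      refine ⟨c', ?_⟩
      have h1 := hf c'
      have h2 := congrArg Subtype.val hc
      exact congrArg ModuleCat.Hom.hom (h1.symm.trans h2)
end Res
end
noncomputable section

set_option maxSynthPendingDepth 3

namespace Res

variable {R M : Type u} [CommRing R] [AddCommGroup M] [Module R M]

theorem HH_subsingleton (F : Res R M) (N : Type u) [AddCommGroup N] [Module R N] (n : ℕ) :
    Subsingleton (F.HH N n) ↔
      ∀ f : F.P (n+1) →ₗ[R] N, f ∘ₗ F.d (n+1) = 0 → ∃ g : F.P n →ₗ[R] N, g ∘ₗ F.d n = f := by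
  rw [Submodule.Quotient.subsingleton_iff]
  constructor
  · intro h f hf
    have : (⟨f, hf⟩ : F.coc N n) ∈ (F.cob N n).submoduleOf (F.coc N n) := by rw [h]; trivial
    exact this
  · intro h
    rw [eq_top_iff]
    rintro ⟨f, hf⟩ -
    exact h f hf

/-- exactness of the dual complex at `P (n+1)` -/
def DEx (F : Res R M) (n : ℕ) : Prop := Subsingleton (F.HH R n)

theorem dex_iff (F : Res R M) (n : ℕ) : F.DEx n ↔ Subsingleton (extM R (n+1) M R) := by
  obtain ⟨e⟩ := F.ext_iso R n
  exact e.toEquiv.subsingleton_congr.symm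

theorem DEx.dual {F : Res R M} {n : ℕ} (h : F.DEx n) (Q : Type u) [AddCommGroup Q] [Module R Q]
    [Module.Projective R Q] : Subsingleton (F.HH (Module.Dual R Q) n) := by
  rw [DEx, HH_subsingleton] at h
  rw [HH_subsingleton]
  intro f hf
  have hr : ∀ q, f.flip q ∈ LinearMap.range (F.d n).dualMap := by
    intro q
    obtain ⟨g, hg⟩ := h (f.flip q) (by
      ext x
      exact LinearMap.congr_fun (LinearMap.congr_fun hf x) q)
    exact ⟨g, hg⟩
  obtain ⟨g, hg⟩ := Module.projective_lifting_property (F.d n).dualMap.rangeRestrict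
    (f.flip.codRestrict _ hr) (LinearMap.surjective_rangeRestrict _)
  refine ⟨g.flip, ?_⟩
  ext x q
  have := congrArg Subtype.val (LinearMap.congr_fun hg q)
  exact LinearMap.congr_fun this x

theorem shift (F : Res R M) {A B C : Type u} [AddCommGroup A] [Module R A]
    [AddCommGroup B] [Module R B] [AddCommGroup C] [Module R C]
    (ι : A →ₗ[R] B) (π : B →ₗ[R] C) (hι : Function.Injective ι) (hπ : Function.Surjective π)
    (hex : LinearMap.range ι = LinearMap.ker π) (n : ℕ)
    (h0 : Subsingleton (F.HH B n)) (h1 : Subsingleton (F.HH B (n+1))) :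
    Nonempty (F.HH A (n+1) ≃ₗ[R] F.HH C n) := by
  have hp := F.projective
  rw [HH_subsingleton] at h0 h1
  have hπι : π ∘ₗ ι = 0 := by
    ext x
    have : ι x ∈ LinearMap.ker π := by rw [← hex]; exact ⟨x, rfl⟩
    exact this
  have lift : ∀ {i : ℕ} (f : F.P i →ₗ[R] B), π ∘ₗ f = 0 → ∃ g : F.P i →ₗ[R] A, ι ∘ₗ g = f := by
    intro i f hf
    have hr : ∀ x, f x ∈ LinearMap.range ι := by
      intro x; rw [hex]; exact LinearMap.congr_fun hf x
    refine ⟨(LinearEquiv.ofInjective ι hι).symm.toLinearMap ∘ₗ f.codRestrict _ hr, ?_⟩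
    ext x
    have := congrArg Subtype.val
      ((LinearEquiv.ofInjective ι hι).apply_symm_apply (f.codRestrict _ hr x))
    exact this
  have inj : ∀ {i : ℕ} (f g : F.P i →ₗ[R] A), ι ∘ₗ f = ι ∘ₗ g → f = g := by
    intro i f g h
    ext x
    exact hι (LinearMap.congr_fun h x)
  let S : Submodule R ((F.P (n+1) →ₗ[R] B) × (F.P (n+2) →ₗ[R] A)) :=
    { carrier := {p | p.1 ∘ₗ F.d (n+1) = ι ∘ₗ p.2}
      zero_mem' := by simp
      add_mem' := by
        intro a b ha hb
        simp only [Set.mem_ofPred_eq] at *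
        simp [LinearMap.add_comp, LinearMap.comp_add, ha, hb]
      smul_mem' := by
        intro c a ha
        simp only [Set.mem_ofPred_eq] at *
        simp [LinearMap.smul_comp, LinearMap.comp_smul, ha] }
  let f1 : S →ₗ[R] F.coc C n :=
    { toFun := fun s => ⟨π ∘ₗ s.1.1, by
        have : s.1.1 ∘ₗ F.d (n+1) = ι ∘ₗ s.1.2 := s.2
        change (π ∘ₗ s.1.1) ∘ₗ F.d (n+1) = 0
        rw [LinearMap.comp_assoc, this, ← LinearMap.comp_assoc, hπι, LinearMap.zero_comp]⟩
      map_add' := fun a b => by ext; simp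
      map_smul' := fun r a => by ext; simp }
  let g1 : S →ₗ[R] F.coc A (n+1) :=
    { toFun := fun s => ⟨s.1.2, by
        have : s.1.1 ∘ₗ F.d (n+1) = ι ∘ₗ s.1.2 := s.2
        change s.1.2 ∘ₗ F.d (n+1+1) = 0
        apply inj
        rw [← LinearMap.comp_assoc, ← this, LinearMap.comp_assoc, F.dd]
        simp⟩
      map_add' := fun a b => rfl
      map_smul' := fun r a => rfl }
  refine common_quot (Submodule.mkQ _ ∘ₗ g1) ((Submodule.mkQ _) ∘ₗ f1)
    ((Submodule.mkQ_surjective _).comp ?_)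
    ((Submodule.mkQ_surjective _).comp ?_) ?_
  · rintro ⟨g, hg⟩
    have hg' : g ∘ₗ F.d (n+1+1) = 0 := hg
    obtain ⟨f, hf⟩ := h1 (ι ∘ₗ g) (by rw [LinearMap.comp_assoc, hg', LinearMap.comp_zero])
    exact ⟨⟨(f, g), hf⟩, rfl⟩
  · rintro ⟨c, hc⟩
    have hc' : c ∘ₗ F.d (n+1) = 0 := hc
    obtain ⟨f, hf⟩ := Module.projective_lifting_property π c hπ
    obtain ⟨g, hg⟩ := lift (f ∘ₗ F.d (n+1)) (by rw [← LinearMap.comp_assoc, hf, hc'])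
    exact ⟨⟨(f, g), hg.symm⟩, Subtype.ext hf⟩
  · rintro ⟨⟨f, g⟩, hs⟩
    have hs' : f ∘ₗ F.d (n+1) = ι ∘ₗ g := hs
    simp only [LinearMap.comp_apply, Submodule.mkQ_apply, Submodule.Quotient.mk_eq_zero]
    change g ∈ F.cob A (n+1) ↔ π ∘ₗ f ∈ F.cob C n
    constructor
    · rintro ⟨h, hh⟩
      have hh' : h ∘ₗ F.d (n+1) = g := hh
      obtain ⟨b, hb⟩ := h0 (f - ι ∘ₗ h) (by
        rw [LinearMap.sub_comp, hs', LinearMap.comp_assoc, hh', sub_self])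
      refine ⟨π ∘ₗ b, ?_⟩
      change (π ∘ₗ b) ∘ₗ F.d n = _
      rw [LinearMap.comp_assoc, hb, LinearMap.comp_sub, ← LinearMap.comp_assoc, hπι]
      simp
    · rintro ⟨c, hc⟩
      have hc' : c ∘ₗ F.d n = π ∘ₗ f := hc
      obtain ⟨b, hb⟩ := Module.projective_lifting_property π c hπ
      obtain ⟨h, hh⟩ := lift (f - b ∘ₗ F.d n) (by
        rw [LinearMap.comp_sub, ← LinearMap.comp_assoc, hb, hc', sub_self])
      refine ⟨h, ?_⟩
      change h ∘ₗ F.d (n+1) = g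
      apply inj
      rw [← LinearMap.comp_assoc, hh, LinearMap.sub_comp, LinearMap.comp_assoc, F.dd, hs']
      simp

/-- `Z_k = λ Ω^k M` -/
def Z (F : Res R M) (k : ℕ) : Type u := ↥(LinearMap.range (F.d k).dualMap)

instance (F : Res R M) (k : ℕ) : AddCommGroup (F.Z k) :=
  inferInstanceAs (AddCommGroup ↥(LinearMap.range (F.d k).dualMap))

instance (F : Res R M) (k : ℕ) : Module R (F.Z k) :=
  inferInstanceAs (Module R ↥(LinearMap.range (F.d k).dualMap))

def Zι (F : Res R M) (k : ℕ) : F.Z k →ₗ[R] Module.Dual R (F.P (k+1)) :=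
  (LinearMap.range (F.d k).dualMap).subtype

def Zπ (F : Res R M) (k : ℕ) : Module.Dual R (F.P k) →ₗ[R] F.Z k :=
  (F.d k).dualMap.rangeRestrict

theorem Zι_inj (F : Res R M) (k : ℕ) : Function.Injective (F.Zι k) :=
  Submodule.subtype_injective _

theorem Zπ_surj (F : Res R M) (k : ℕ) : Function.Surjective (F.Zπ k) :=
  LinearMap.surjective_rangeRestrict _

theorem Zιπ (F : Res R M) (k : ℕ) : F.Zι k ∘ₗ F.Zπ k = (F.d k).dualMap := rfl

theorem Zι_range (F : Res R M) (k : ℕ) : LinearMap.range (F.Zι k) =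
    LinearMap.range (F.d k).dualMap := Submodule.range_subtype _

theorem Zπ_ker (F : Res R M) (k : ℕ) : LinearMap.ker (F.Zπ k) =
    LinearMap.ker (F.d k).dualMap := LinearMap.ker_rangeRestrict _

theorem DEx.ker_eq {F : Res R M} {n : ℕ} (h : F.DEx n) :
    LinearMap.range (F.d n).dualMap = LinearMap.ker (F.d (n+1)).dualMap := by
  rw [DEx, HH_subsingleton] at h
  ext f
  constructor
  · rintro ⟨g, rfl⟩
    change (g ∘ₗ F.d n) ∘ₗ F.d (n+1) = 0
    rw [LinearMap.comp_assoc, F.dd, LinearMap.comp_zero]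
  · intro hf
    obtain ⟨g, hg⟩ := h f hf
    exact ⟨g, hg⟩

variable {K : Type u} [AddCommGroup K] [Module R K]

theorem shiftZ (F : Res R M) (G : Res R K) (n b : ℕ) (h0 : F.DEx n) (h1 : F.DEx (n+1))
    (h2 : G.DEx b) : Nonempty (F.HH (G.Z b) (n+1) ≃ₗ[R] F.HH (G.Z (b+1)) n) := by
  have hp := G.projective
  exact F.shift (G.Zι b) (G.Zπ (b+1)) (G.Zι_inj b) (G.Zπ_surj _)
    (by rw [Zι_range, Zπ_ker, h2.ker_eq]) n (h0.dual _) (h1.dual _)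

section bil
variable {P0 P1 P2 Q0 Q1 Q2 : Type u} [AddCommGroup P0] [Module R P0] [AddCommGroup P1] [Module R P1]
  [AddCommGroup P2] [Module R P2] [AddCommGroup Q0] [Module R Q0] [AddCommGroup Q1] [Module R Q1]
  [AddCommGroup Q2] [Module R Q2]

def Sm (d1 : P2 →ₗ[R] P1) (e1 : Q2 →ₗ[R] Q1) : Submodule R (P1 →ₗ[R] (Q1 →ₗ[R] R)) where
  carrier := {x | (∀ p q, x (d1 p) q = 0) ∧ (∀ p q, x p (e1 q) = 0)}
  zero_mem' := by simp
  add_mem' := by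
    rintro x y ⟨h1, h2⟩ ⟨h3, h4⟩
    constructor <;> intro p q <;> simp [*]
  smul_mem' := by
    rintro c x ⟨h1, h2⟩
    constructor <;> intro p q <;> simp [*]

def IsB (d0 : P1 →ₗ[R] P0) (e0 : Q1 →ₗ[R] Q0) (x : P1 →ₗ[R] (Q1 →ₗ[R] R)) : Prop :=
  ∃ y : P0 →ₗ[R] (Q0 →ₗ[R] R), ∀ p q, x p q = y (d0 p) (e0 q)

theorem IsB_flip (d0 : P1 →ₗ[R] P0) (e0 : Q1 →ₗ[R] Q0) (x : P1 →ₗ[R] (Q1 →ₗ[R] R)) :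
    IsB d0 e0 x ↔ IsB e0 d0 x.flip := by
  constructor
  · rintro ⟨y, hy⟩
    exact ⟨y.flip, fun p q => hy q p⟩
  · rintro ⟨y, hy⟩
    exact ⟨y.flip, fun p q => hy q p⟩

def flipS (d1 : P2 →ₗ[R] P1) (e1 : Q2 →ₗ[R] Q1) : Sm d1 e1 →ₗ[R] Sm e1 d1 where
  toFun x := ⟨x.1.flip, fun p q => x.2.2 q p, fun p q => x.2.1 q p⟩
  map_add' _ _ := rfl
  map_smul' _ _ := rfl

theorem half (F : Res R M) (a : ℕ) (e0 : Q1 →ₗ[R] Q0) (e1 : Q2 →ₗ[R] Q1)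
    {L : Type u} [AddCommGroup L] [Module R L] (ι : L →ₗ[R] (Q1 →ₗ[R] R))
    (π : (Q0 →ₗ[R] R) →ₗ[R] L) (hι : Function.Injective ι) (hπ : Function.Surjective π)
    (hιπ : ι ∘ₗ π = e0.dualMap) (hr : LinearMap.range ι = LinearMap.ker e1.dualMap) :
    ∃ f : Sm (F.d (a+1)) e1 →ₗ[R] F.HH L a, Function.Surjective f ∧
      ∀ x, f x = 0 ↔ IsB (F.d a) e0 x.1 := by
  have hpF := F.projective
  have hf : ∀ (x : Sm (F.d (a+1)) e1) p, x.1 p ∈ LinearMap.range ι := by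
    intro x p
    rw [hr]
    ext q
    exact x.2.2 p q
  let f0 : Sm (F.d (a+1)) e1 →ₗ[R] (F.P (a+1) →ₗ[R] L) :=
    { toFun := fun x =>
        (LinearEquiv.ofInjective ι hι).symm.toLinearMap ∘ₗ x.1.codRestrict _ (hf x)
      map_add' := fun x y => by
        ext p
        exact (LinearEquiv.ofInjective ι hι).symm.map_add (x.1.codRestrict _ (hf x) p)
          (y.1.codRestrict _ (hf y) p)
      map_smul' := fun r x => by
        ext p
        exact (LinearEquiv.ofInjective ι hι).symm.map_smul r (x.1.codRestrict _ (hf x) p) }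
  have hf0 : ∀ x p, ι (f0 x p) = x.1 p := by
    intro x p
    exact congrArg Subtype.val
      ((LinearEquiv.ofInjective ι hι).apply_symm_apply (x.1.codRestrict _ (hf x) p))
  let f1 : Sm (F.d (a+1)) e1 →ₗ[R] F.coc L a := f0.codRestrict _ (by
    intro x
    ext p
    apply hι
    refine (hf0 x _).trans ?_
    ext q
    simpa using x.2.1 p q)
  refine ⟨Submodule.mkQ _ ∘ₗ f1, (Submodule.mkQ_surjective _).comp ?_, ?_⟩
  · rintro ⟨f, h⟩
    refine ⟨⟨ι ∘ₗ f, ?_, ?_⟩, ?_⟩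
    · intro p q
      have h' : f (F.d (a+1) p) = 0 := LinearMap.congr_fun h p
      simp [h']
    · intro p q
      have : ι (f p) ∈ LinearMap.ker e1.dualMap := by
        rw [← hr]; exact ⟨_, rfl⟩
      exact LinearMap.congr_fun this q
    · apply Subtype.ext
      ext p
      apply hι
      exact hf0 _ p
  · intro x
    simp only [LinearMap.comp_apply, Submodule.mkQ_apply, Submodule.Quotient.mk_eq_zero]
    change f0 x ∈ F.cob L a ↔ _
    constructor
    · rintro ⟨c, hc⟩
      obtain ⟨y, hy⟩ := Module.projective_lifting_property π c hπ
      refine ⟨y, fun p q => ?_⟩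
      have e1 : c (F.d a p) = f0 x p := LinearMap.congr_fun hc p
      have e2 : π (y (F.d a p)) = c (F.d a p) := LinearMap.congr_fun hy _
      have e3 : ι (π (y (F.d a p))) = e0.dualMap (y (F.d a p)) := LinearMap.congr_fun hιπ _
      rw [← hf0, ← e1, ← e2, e3]
      rfl
    · rintro ⟨y, hy⟩
      refine ⟨π ∘ₗ y, ?_⟩
      ext p
      apply hι
      rw [hf0]
      have e3 : ι (π (y (F.d a p))) = e0.dualMap (y (F.d a p)) := LinearMap.congr_fun hιπ _
      refine e3.trans ?_
      ext q
      exact (hy p q).symm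

end bil

theorem swapZ (F : Res R M) (G : Res R K) (a b : ℕ) (h1 : F.DEx a) (h2 : G.DEx b) :
    Nonempty (F.HH (G.Z b) a ≃ₗ[R] G.HH (F.Z a) b) := by
  obtain ⟨f, hf, hf'⟩ := F.half a (G.d b) (G.d (b+1)) (G.Zι b) (G.Zπ b) (G.Zι_inj b)
    (G.Zπ_surj b) (G.Zιπ b) (by rw [Zι_range, h2.ker_eq])
  obtain ⟨g, hg, hg'⟩ := G.half b (F.d a) (F.d (a+1)) (F.Zι a) (F.Zπ a) (F.Zι_inj a)
    (F.Zπ_surj a) (F.Zιπ a) (by rw [Zι_range, h1.ker_eq])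
  refine common_quot (S := Sm (F.d (a+1)) (G.d (b+1))) (X := F.HH (G.Z b) a)
    (Y := G.HH (F.Z a) b) f (g ∘ₗ flipS (F.d (a+1)) (G.d (b+1))) hf (hg.comp ?_) ?_
  · intro x
    exact ⟨flipS _ _ x, rfl⟩
  · intro x
    rw [hf', LinearMap.comp_apply, hg', IsB_flip]
    rfl

theorem shift_many (F : Res R M) (G : Res R K) (n b : ℕ) (hF : ∀ j ≤ n, F.DEx j)
    (hG : ∀ j < b + n, G.DEx j) :
    Nonempty (F.HH (G.Z b) n ≃ₗ[R] F.HH (G.Z (b+n)) 0) := by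
  induction n generalizing b with
  | zero => exact ⟨LinearEquiv.refl _ _⟩
  | succ n ih =>
    obtain ⟨e⟩ := F.shiftZ G n b (hF n (by omega)) (hF _ le_rfl) (hG b (by omega))
    obtain ⟨e'⟩ := ih (b+1) (fun j hj => hF j (by omega)) (fun j hj => hG j (by omega))
    have : b + 1 + n = b + (n+1) := by omega
    rw [this] at e'
    exact ⟨e.trans e'⟩

theorem main (F : Res R M) (G : Res R K) (n : ℕ) (hF : ∀ j ≤ n, F.DEx j)
    (hG : ∀ j ≤ n, G.DEx j) :
    Nonempty (F.HH (G.Z 0) n ≃ₗ[R] G.HH (F.Z 0) n) := by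
  obtain ⟨e⟩ := F.shift_many G n 0 hF (fun j hj => hG j (by omega))
  generalize hm : 0 + n = m at e
  rw [show m = n by omega] at e
  obtain ⟨e'⟩ := F.swapZ G 0 n (hF 0 (by omega)) (hG n le_rfl)
  exact ⟨e.trans e'⟩

theorem main_ext (F : Res R M) (G : Res R K) (i : ℕ) (hi : 1 ≤ i)
    (hF : ∀ j, 0 < j → j ≤ i → Subsingleton (extM R j M R))
    (hG : ∀ j, 0 < j → j ≤ i → Subsingleton (extM R j K R)) :
    Nonempty (extM R i M (G.Z 0) ≃ₗ[R] extM R i K (F.Z 0)) := by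
  obtain ⟨n, rfl⟩ : ∃ n, i = n + 1 := ⟨i - 1, by omega⟩
  obtain ⟨e⟩ := F.main G n (fun j hj => (F.dex_iff j).2 (hF _ (by omega) (by omega)))
    (fun j hj => (G.dex_iff j).2 (hG _ (by omega) (by omega)))
  obtain ⟨e1⟩ := F.ext_iso (G.Z 0) n
  obtain ⟨e2⟩ := G.ext_iso (F.Z 0) n
  exact ⟨e1.trans (e.trans e2.symm)⟩

end Res
end
noncomputable section

set_option maxSynthPendingDepth 3

variable {R M : Type u} [CommRing R] [AddCommGroup M] [Module R M]

theorem extM_congr (i : ℕ) {M M' N N' : Type u} [AddCommGroup M] [Module R M]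
    [AddCommGroup N] [Module R N] [AddCommGroup M'] [Module R M'] [AddCommGroup N'] [Module R N']
    (e : M ≃ₗ[R] M') (e' : N ≃ₗ[R] N') : Nonempty (extM R i M N ≃ₗ[R] extM R i M' N') := by
  have a := ((Ext R (ModuleCat.{u} R) i).mapIso e.toModuleIso.symm.op).app (ModuleCat.of R N)
  have b := ((Ext R (ModuleCat.{u} R) i).obj (Opposite.op (ModuleCat.of R M'))).mapIso
    e'.toModuleIso
  exact ⟨a.toLinearEquiv.trans b.toLinearEquiv⟩

theorem Res.exists_res (M : Type u) [AddCommGroup M] [Module R M] : Nonempty (Res R M) := by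
  let Q := ProjectiveResolution.of (ModuleCat.of R M)
  refine ⟨{ P := Q.complex.X
            projective := fun i => (IsProjective.iff_projective _).2 (Q.projective i)
            d := fun i => (Q.complex.d (i+1) i).hom
            ε := (Q.π.f 0).hom
            surj := ?_
            exact0 := ?_
            exact := ?_ }⟩
  · exact (ModuleCat.epi_iff_surjective (Q.π.f 0)).1 inferInstance
  · have := (ShortComplex.moduleCat_exact_iff_range_eq_ker _).1 Q.exact₀
    exact this
  · intro i
    exact (ShortComplex.moduleCat_exact_iff_range_eq_ker _).1 (Q.exact_succ i)

theorem cover_iso {P P' : Type u} [AddCommGroup P] [Module R P] [AddCommGroup P'] [Module R P']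
    [Module.Projective R P] [Module.Projective R P'] (ε : P →ₗ[R] M) (ε' : P' →ₗ[R] M)
    (h : Function.Surjective ε) (h' : Function.Surjective ε')
    (m : (LinearMap.ker ε).IsSuperfluous) (m' : (LinearMap.ker ε').IsSuperfluous) :
    ∃ φ : P ≃ₗ[R] P', ∀ p, ε' (φ p) = ε p := by
  obtain ⟨φ, hφ⟩ := Module.projective_lifting_property ε' ε h'
  have hφ' : ∀ p, ε' (φ p) = ε p := fun p => LinearMap.congr_fun hφ p
  have s1 : Function.Surjective φ := by
    rw [← LinearMap.range_eq_top]
    apply m'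
    rw [eq_top_iff]
    rintro x -
    obtain ⟨p, hp⟩ := h (ε' x)
    rw [Submodule.mem_sup]
    exact ⟨φ p, ⟨p, rfl⟩, x - φ p, by simp [hφ', hp], by simp⟩
  obtain ⟨s, hs⟩ := Module.projective_lifting_property φ LinearMap.id s1
  have hs' : ∀ x, φ (s x) = x := fun x => LinearMap.congr_fun hs x
  have s2 : Function.Surjective s := by
    rw [← LinearMap.range_eq_top]
    apply m
    rw [eq_top_iff]
    rintro p -
    rw [Submodule.mem_sup]
    refine ⟨s (φ p), ⟨_, rfl⟩, p - s (φ p), ?_, by simp⟩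
    rw [LinearMap.mem_ker, map_sub, ← hφ', ← hφ' (s _), hs', sub_self]
  refine ⟨LinearEquiv.ofBijective φ ⟨?_, s1⟩, hφ'⟩
  intro a b hab
  obtain ⟨a, rfl⟩ := s2 a
  obtain ⟨b, rfl⟩ := s2 b
  rw [hs', hs'] at hab
  rw [hab]

theorem lambda_unique (F F' : MinRes R M) : Nonempty (F.lambdaMod ≃ₗ[R] F'.lambdaMod) := by
  have := F.projective 0
  have := F'.projective 0
  obtain ⟨φ, hφ⟩ := cover_iso F.ε F'.ε F.surj F'.surj F.min_eps F'.min_eps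
  have key : ∀ (F : MinRes R M) (f : Module.Dual R (F.P 0)),
      F.toRes.Zπ 0 f = 0 ↔ ∀ p, F.ε p = 0 → f p = 0 := by
    intro F f
    change f ∈ LinearMap.ker (F.toRes.Zπ 0) ↔ _
    rw [Res.Zπ_ker]
    constructor
    · intro h p hp
      have : p ∈ LinearMap.range (F.d 0) := by rw [F.exact0]; exact hp
      obtain ⟨q, rfl⟩ := this
      exact LinearMap.congr_fun h q
    · intro h
      ext q
      apply h
      have : F.d 0 q ∈ LinearMap.ker F.ε := by rw [← F.exact0]; exact ⟨q, rfl⟩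
      exact this
  obtain ⟨e⟩ := common_quot (S := Module.Dual R (F.P 0)) (X := F.toRes.Z 0) (Y := F'.toRes.Z 0)
    (F.toRes.Zπ 0) (F'.toRes.Zπ 0 ∘ₗ φ.symm.toLinearMap.dualMap)
    (F.toRes.Zπ_surj 0) ((F'.toRes.Zπ_surj 0).comp (by
      intro f
      refine ⟨φ.toLinearMap.dualMap f, ?_⟩
      ext x
      exact congrArg f (φ.apply_symm_apply x))) (by
      intro f
      refine (key F f).trans (Iff.trans ?_ (key F' (φ.symm.toLinearMap.dualMap f)).symm)
      constructor
      · intro h p hp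
        have := hφ (φ.symm p)
        rw [LinearEquiv.apply_symm_apply] at this
        exact h (φ.symm p) (by rw [← this, hp])
      · intro h p hp
        have := h (φ p) (by rw [hφ, hp])
        exact (congrArg f (φ.symm_apply_apply p)).symm.trans this)
  exact ⟨e⟩

def MinRes.transport {N : Type u} [AddCommGroup N] [Module R N] (F : MinRes R M) (e : M ≃ₗ[R] N) :
    MinRes R N where
  P := F.P
  projective := F.projective
  finite := F.finite
  d := F.d
  ε := e.toLinearMap ∘ₗ F.ε
  surj := e.surjective.comp F.surj
  exact0 := by rw [LinearEquiv.ker_comp]; exact F.exact0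
  exact := F.exact
  min_eps := by rw [LinearEquiv.ker_comp]; exact F.min_eps
  min_d := F.min_d

def spliceP (F : Res R M) (D : Res R (Module.Dual R M)) : ℕ → ModuleCat.{u} R
  | 0 => ModuleCat.of R (Module.Dual R (F.P 0))
  | n+1 => D.P n

def spliceD (F : Res R M) (D : Res R (Module.Dual R M)) :
    (i : ℕ) → (↥(spliceP F D (i + 1)) →ₗ[R] ↥(spliceP F D i))
  | 0 => F.ε.dualMap ∘ₗ D.ε
  | n+1 => D.d n

theorem ker_Zπ (F : Res R M) : LinearMap.range F.ε.dualMap = LinearMap.ker (F.Zπ 0) := by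
  rw [Res.Zπ_ker]
  ext f
  constructor
  · rintro ⟨g, rfl⟩
    change (g ∘ₗ F.ε) ∘ₗ F.d 0 = 0
    rw [LinearMap.comp_assoc, F.d0, LinearMap.comp_zero]
  · intro h
    have h' : LinearMap.ker F.ε ≤ LinearMap.ker f := by
      rw [← F.exact0]
      rintro _ ⟨q, rfl⟩
      exact LinearMap.congr_fun h q
    refine ⟨(LinearMap.ker F.ε).liftQ f h' ∘ₗ (F.ε.quotKerEquivOfSurjective F.surj).symm, ?_⟩
    ext p
    have : (F.ε.quotKerEquivOfSurjective F.surj).symm (F.ε p) = Submodule.Quotient.mk p := by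
      rw [LinearEquiv.symm_apply_eq]; rfl
    change (LinearMap.ker F.ε).liftQ f h' ((F.ε.quotKerEquivOfSurjective F.surj).symm (F.ε p)) = _
    rw [this]
    rfl

theorem dual_inj (F : Res R M) : Function.Injective F.ε.dualMap :=
  LinearMap.dualMap_injective_of_surjective F.surj

def splice (F : Res R M) (D : Res R (Module.Dual R M))
    (hp : Module.Projective R (Module.Dual R (F.P 0))) : Res R (F.Z 0) where
  P := spliceP F D
  projective i := match i with
    | 0 => hp
    | n+1 => D.projective n
  d := spliceD F D
  ε := F.Zπ 0
  surj := F.Zπ_surj 0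
  exact0 := by
    refine Eq.trans ?_ (ker_Zπ F)
    change LinearMap.range (F.ε.dualMap ∘ₗ D.ε) = _
    rw [LinearMap.range_comp_of_range_eq_top _ (LinearMap.range_eq_top.2 D.surj)]
  exact i := match i with
    | 0 => by
      change LinearMap.range (D.d 0) = LinearMap.ker (F.ε.dualMap ∘ₗ D.ε)
      rw [LinearMap.ker_comp_of_ker_eq_bot _ (LinearMap.ker_eq_bot.2 (dual_inj F)), D.exact0]
    | n+1 => D.exact n

theorem gdim_lambda (F : Res R M) (hp : Module.Projective R (Module.Dual R (F.P 0)))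
    (hs : Function.Surjective (Module.Dual.eval R M))
    (h : ∀ i : ℕ, 0 < i → Subsingleton (extM R i (Module.Dual R M) R)) (i : ℕ) (hi : 0 < i) :
    Subsingleton (extM R i (F.Z 0) R) := by
  obtain ⟨D⟩ := Res.exists_res (R := R) (Module.Dual R M)
  let T := splice F D hp
  obtain ⟨n, rfl⟩ : ∃ n, i = n + 1 := ⟨i - 1, by omega⟩
  rw [← T.dex_iff, Res.DEx, Res.HH_subsingleton]
  cases n with
  | zero =>
    intro (f : D.P 0 →ₗ[R] R) (hf : f ∘ₗ D.d 0 = 0)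
    have h1 : f ∈ LinearMap.range D.ε.dualMap := by
      rw [ker_Zπ, Res.Zπ_ker]
      exact hf
    obtain ⟨g, hg⟩ := h1
    obtain ⟨m, rfl⟩ := hs g
    obtain ⟨p, rfl⟩ := F.surj m
    refine ⟨Module.Dual.eval R (F.P 0) p, ?_⟩
    refine Eq.trans ?_ hg
    rfl
  | succ n =>
    have h2 := (D.dex_iff n).2 (h _ (by omega))
    rw [Res.DEx, Res.HH_subsingleton] at h2
    exact h2

theorem gdim_zero (h : GDim R M = 0) : IsGDimZero R M := by
  by_cases hne : {n : ℕ∞ | ∃ k : ℕ, n = k ∧ GDimLE R k (ModuleCat.of R M)}.Nonempty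
  · have := csInf_mem hne
    rw [show sInf {n : ℕ∞ | ∃ k : ℕ, n = k ∧ GDimLE R k (ModuleCat.of R M)} = 0 from h] at this
    obtain ⟨k, hk, hk'⟩ := this
    obtain rfl : k = 0 := by exact_mod_cast hk.symm
    exact hk'
  · rw [Set.not_nonempty_iff_eq_empty] at hne
    rw [GDim, hne, sInf_empty] at h
    exact absurd h (by simp)

theorem rgr_vanish {i : ℕ} (h : (i : ℕ∞) < rgr R M) (j : ℕ) (hj : 0 < j) (hji : j ≤ i) :
    Subsingleton (extM R j M R) := by
  by_contra hc
  have : rgr R M ≤ j := sInf_le ⟨j, rfl, hj, hc⟩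
  have h2 := lt_of_lt_of_le h this
  have : i < j := by exact_mod_cast h2
  omega

theorem linked_aux (F : MinRes R M) (h : IsHorizontallyLinked R M) (i : ℕ) (hi : 1 ≤ i)
    (h1 : ∀ j, 0 < j → j ≤ i → Subsingleton (extM R j M R))
    (h2 : ∀ j, 0 < j → j ≤ i → Subsingleton (extM R j F.lambdaMod R)) :
    Nonempty (extM R i M M ≃ₗ[R] extM R i F.lambdaMod F.lambdaMod) := by
  obtain ⟨F', G', ⟨e⟩⟩ := h
  obtain ⟨l⟩ := lambda_unique F' F
  let G := G'.transport l
  obtain ⟨m⟩ := Res.main_ext F.toRes G.toRes i hi h1 h2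
  obtain ⟨c⟩ := extM_congr (R := R) i (LinearEquiv.refl R M) e
  exact ⟨c.symm.trans m⟩

end

section Statements

variable (R : Type u) [CommRing R] [IsNoetherianRing R]

theorem stmt8 (M N : Type u) [AddCommGroup M] [Module R M] [Module.Finite R M]
    [AddCommGroup N] [Module R N] [Module.Finite R N]
    (F : MinRes R M) (G : MinRes R N) :
    (IsHorizontallyLinked R M →
      ((∀ i : ℕ, 1 ≤ i → (i : ℕ∞) < min (rgr R M) (rgr R F.lambdaMod) →
        Nonempty (extM R i M M ≃ₗ[R] extM R i F.lambdaMod F.lambdaMod)) ∧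
      (GDim R M = 0 → ∀ i : ℕ, 0 < i →
        Nonempty (extM R i M M ≃ₗ[R] extM R i F.lambdaMod F.lambdaMod)))) ∧
    (Nonempty (M ≃ₗ[R] F.lambdaMod) → Nonempty (N ≃ₗ[R] G.lambdaMod) →
      ∀ i : ℕ, 1 ≤ i → (i : ℕ∞) < min (rgr R M) (rgr R N) →
        Nonempty (extM R i M N ≃ₗ[R] extM R i N M)) := by
  refine ⟨fun h => ⟨fun i hi hr => ?_, fun hg i hi => ?_⟩, ?_⟩
  · rw [lt_min_iff] at hr
    exact linked_aux F h i hi (rgr_vanish hr.1) (rgr_vanish hr.2)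
  · obtain ⟨-, hb, h1, h2⟩ := gdim_zero hg
    have := F.projective 0
    have := F.finite 0
    exact linked_aux F h i hi (fun j hj _ => h1 j hj)
      (fun j hj _ => gdim_lambda F.toRes
        (inferInstanceAs (Module.Projective R (Module.Dual R (F.P 0)))) hb.2 h2 j hj)
  · rintro ⟨e⟩ ⟨e'⟩ i hi hr
    rw [lt_min_iff] at hr
    obtain ⟨m⟩ := Res.main_ext F.toRes G.toRes i hi (rgr_vanish hr.1) (rgr_vanish hr.2)
    obtain ⟨c⟩ := extM_congr (R := R) i (LinearEquiv.refl R M) e'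
    obtain ⟨c'⟩ := extM_congr (R := R) i (LinearEquiv.refl R N) e
    exact ⟨c.trans (LinearEquiv.trans m c'.symm)⟩

end Statements
end
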